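/- arXiv:1807.07802 — 2 statements merged into one kernel-verified Lean document; each statement's English description precedes it below -/
import Mathlib

section
/- Let Γ = (V,E) be a finite simplicial graph. If #V ≤ 5, then the right-angled Coxeter group C(Γ) is coherent. -/
def Group.Slender (G : Type*) [Group G] : Prop := ∀ H : Subgroup G, H.FG

def Group.FinitelyPresented (G : Type*) [Group G] : Prop :=
  ∃ (n : ℕ) (rels : Set (FreeGroup (Fin n))), rels.Finite ∧ Nonempty (PresentedGroup rels ≃* G)

def Group.Coherent (G : Type*) [Group G] : Prop :=
  ∀ H : Subgroup G, H.FG → Group.FinitelyPresented H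

/-- The Coxeter matrix of the right-angled Coxeter group of a simplicial graph `Γ`:
the label of every edge is `2`, and non-adjacent distinct vertices get the label `0`
(that is, `∞`: no relation). -/
def SimpleGraph.coxeterMatrix {V : Type*} (Γ : SimpleGraph V) [DecidableEq V]
    [DecidableRel Γ.Adj] : CoxeterMatrix V where
  M v w := if v = w then 1 else if Γ.Adj v w then 2 else 0
  isSymm := Matrix.IsSymm.ext fun a b => by
    rcases eq_or_ne a b with h | h
    · simp [h]
    · simp [h, h.symm, Γ.adj_comm]
  diagonal v := by simp
  off_diagonal v w h := by simp only [if_neg h]; split <;> omega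

/-- The right-angled Coxeter group
`C(Γ) = ⟨V ∣ v² = 1 for all v ∈ V, (vw)² = 1 for all {v,w} ∈ E⟩` of a simplicial graph `Γ`. -/
def SimpleGraph.racg {V : Type*} (Γ : SimpleGraph V) [DecidableEq V]
    [DecidableRel Γ.Adj] : Type _ :=
  Γ.coxeterMatrix.Group

instance {V : Type*} (Γ : SimpleGraph V) [DecidableEq V] [DecidableRel Γ.Adj] :
    Group Γ.racg :=
  inferInstanceAs (Group Γ.coxeterMatrix.Group)

namespace RACG
open Subgroup

lemma fp_iff {G : Type} [Group G] : Group.FinitelyPresented G ↔ Group.IsFinitelyPresented G := by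
  constructor
  · rintro ⟨n, R, hR, ⟨e⟩⟩
    have : Finite R := hR
    exact Group.IsFinitelyPresented.equiv e
  · intro h
    obtain ⟨n, s, hs, ⟨e⟩⟩ := Group.IsFinitelyPresented.exists_mulEquiv_presentedGroup (G := G)
    exact ⟨n, s, hs, ⟨e.symm⟩⟩

lemma fp_of_ker {H α : Type} [Group H] [Finite α] (f : FreeGroup α →* H)
    (hf : Function.Surjective f) (h : f.ker.IsFinitelyNormallyGenerated) :
    Group.FinitelyPresented H :=
  fp_iff.2 (Group.IsFinitelyPresented.of_surjective f hf h)

lemma ker_of_fp {H α : Type} [Group H] [Finite α] (f : FreeGroup α →* H)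
    (hf : Function.Surjective f) (h : Group.FinitelyPresented H) :
    ∃ R : Set (FreeGroup α), R.Finite ∧ normalClosure R = f.ker := by
  obtain ⟨n, φ, hφ, R, hR, hRk⟩ := fp_iff.1 h
  choose w hw using fun j : Fin n => hf (φ (FreeGroup.of j))
  choose z hz using fun a : α => hφ (f (FreeGroup.of a))
  let u : FreeGroup (Fin n) →* FreeGroup α := FreeGroup.lift w
  let zz : FreeGroup α →* FreeGroup (Fin n) := FreeGroup.lift z
  have hfu : f.comp u = φ := by ext j; simp [u, hw]
  have hφz : φ.comp zz = f := by ext j; simp [zz, hz]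
  let R' : Set (FreeGroup α) := u '' R ∪ Set.range fun a => (FreeGroup.of a)⁻¹ * u (z a)
  refine ⟨R', (hR.image _).union (Set.finite_range _), le_antisymm ?_ ?_⟩
  · apply normalClosure_le_normal
    rintro x (⟨r, hr, rfl⟩ | ⟨a, rfl⟩)
    · have : r ∈ φ.ker := hRk ▸ subset_normalClosure hr
      change f (u r) = 1
      rw [← MonoidHom.comp_apply, hfu]; exact this
    · change f _ = 1
      rw [map_mul, map_inv, ← MonoidHom.comp_apply f u, hfu, hz]; simp
  · intro k hk
    have h1 : ((QuotientGroup.mk' (normalClosure R')).comp u).comp zz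
        = QuotientGroup.mk' (normalClosure R') := by
      ext a
      simp only [MonoidHom.comp_apply, zz, FreeGroup.lift_apply_of]
      symm
      apply QuotientGroup.eq.2
      exact subset_normalClosure (Or.inr ⟨a, rfl⟩)
    have h2 : zz k ∈ normalClosure R := by
      rw [hRk]; change φ (zz k) = 1
      rw [← MonoidHom.comp_apply, hφz]; exact hk
    have h3 : normalClosure R ≤ (normalClosure R').comap u := by
      apply normalClosure_le_normal
      intro r hr
      exact subset_normalClosure (Or.inl ⟨r, hr, rfl⟩)
    have h4 := DFunLike.congr_fun h1 k
    have h5 : QuotientGroup.mk' (normalClosure R') (u (zz k)) = 1 :=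
      (QuotientGroup.eq_one_iff _).2 (h3 h2)
    rw [MonoidHom.comp_apply, MonoidHom.comp_apply, h5] at h4
    exact (QuotientGroup.eq_one_iff _).1 h4.symm

lemma fg_of_map {G K : Type} [Group G] [Group K] (f : G →* K) (hf : Function.Injective f)
    (H : Subgroup G) (h : (H.map f).FG) : H.FG := by
  rw [← Group.fg_iff_subgroup_fg] at h ⊢
  exact Group.fg_of_surjective (f := (H.equivMapOfInjective f hf).symm.toMonoidHom)
    (H.equivMapOfInjective f hf).symm.surjective

lemma fg_map {G K : Type} [Group G] [Group K] (f : G →* K) 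
    (H : Subgroup G) (h : H.FG) : (H.map f).FG := by
  obtain ⟨S, rfl⟩ := h
  rw [MonoidHom.map_closure]
  classical
  exact ⟨S.image f, by simp⟩

lemma coherent_of_injective {G K : Type} [Group G] [Group K] (f : G →* K)
    (hf : Function.Injective f) (h : Group.Coherent K) : Group.Coherent G := by
  intro H hH
  have := fp_iff.1 (h (H.map f) (fg_map f H hH))
  exact fp_iff.2 (Group.IsFinitelyPresented.equiv (H.equivMapOfInjective f hf).symm)

lemma slender_of_injective {G K : Type} [Group G] [Group K] (f : G →* K)
    (hf : Function.Injective f) (h : Group.Slender K) : Group.Slender G :=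
  fun H => fg_of_map f hf H (h _)

lemma slender_ext {G Q : Type} [Group G] [Group Q] (f : G →* Q) (hk : Group.Slender f.ker)
    (hq : Group.Slender Q) : Group.Slender G := by
  classical
  intro K
  have h1 : (K ⊓ f.ker).FG := by
    have := fg_map f.ker.subtype _ (hk (K.subgroupOf f.ker))
    rwa [subgroupOf_map_subtype] at this
  obtain ⟨S, hS⟩ := h1
  obtain ⟨T, hT⟩ := hq (K.map f)
  have hTK : ∀ t : T, ∃ k ∈ K, f k = t := fun t => by
    have : (t : Q) ∈ K.map f := hT ▸ subset_closure t.2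
    simpa using this
  choose l hlK hl using hTK
  rw [Subgroup.fg_iff]
  refine ⟨S ∪ Set.range l, ?_, S.finite_toSet.union (Set.finite_range _)⟩
  have hle : closure (S ∪ Set.range l) ≤ K := by
    rw [closure_le]
    rintro x (hx | ⟨t, rfl⟩)
    · have : x ∈ K ⊓ f.ker := hS ▸ subset_closure hx
      exact this.1
    · exact hlK t
  refine le_antisymm hle ?_
  intro k hk
  have h2 : f k ∈ (closure (S ∪ Set.range l)).map f := by
    have : f k ∈ closure (T : Set Q) := hT ▸ mem_map_of_mem f hk
    refine (closure_le _).2 ?_ this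
    intro t ht
    exact ⟨l ⟨t, ht⟩, subset_closure (Or.inr ⟨_, rfl⟩), hl ⟨t, ht⟩⟩
  obtain ⟨c, hc, hck⟩ := h2
  have h3 : k * c⁻¹ ∈ closure (S : Set G) := by
    rw [hS]
    refine ⟨K.mul_mem hk (K.inv_mem (hle hc)), ?_⟩
    change f _ = 1
    simp [hck]
  have := mul_mem (closure_mono Set.subset_union_left h3) hc
  simpa using this

lemma slender_of_cyclic {G : Type} [Group G] (g : G) (h : zpowers g = ⊤) : Group.Slender G := by
  intro K
  have : IsCyclic G := ⟨g, fun x => by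
    have : x ∈ zpowers g := h ▸ mem_top x
    exact this⟩
  obtain ⟨k, hk⟩ := (inferInstance : IsCyclic K)
  rw [← Group.fg_iff_subgroup_fg, Group.fg_iff]
  refine ⟨{k}, ?_, Set.finite_singleton _⟩
  rw [eq_top_iff, ← zpowers_eq_closure]
  exact fun x _ => hk x

/-- a group generated by two involutions is slender -/
lemma slender_dihedral {G : Type} [Group G] (s t : G) (hs : s * s = 1) (ht : t * t = 1)
    (h : closure {s, t} = ⊤) : Group.Slender G := by
  have hs' : s⁻¹ = s := inv_eq_of_mul_eq_one_left hs
  have ht' : t⁻¹ = t := inv_eq_of_mul_eq_one_left ht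
  have hn : (zpowers (s * t)).Normal := by
    rw [← normalizer_eq_top_iff, eq_top_iff, ← h, closure_le]
    have key : ∀ x : G, x * x = 1 → x * (s * t) * x⁻¹ = (s * t)⁻¹ →
        x ∈ normalizer (zpowers (s * t) : Set G) := by
      intro x hx hc
      rw [mem_normalizer_iff]
      have hx' : x⁻¹ = x := inv_eq_of_mul_eq_one_left hx
      have fwd : ∀ n ∈ zpowers (s * t), x * n * x⁻¹ ∈ zpowers (s * t) := by
        rintro n ⟨k, rfl⟩
        refine ⟨-k, ?_⟩
        simp only [zpow_neg]
        rw [← conj_zpow, hc, inv_zpow]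
      intro n
      refine ⟨fwd n, fun hh => ?_⟩
      have := fwd _ hh
      rw [hx'] at this
      have e : x * (x * n * x) * x = n := by
        calc x * (x * n * x) * x = (x * x) * n * (x * x) := by group
          _ = n := by simp [hx]
      rwa [e] at this
    rintro x (rfl | rfl)
    · apply key _ hs
      rw [mul_inv_rev, hs', ht', ← mul_assoc, hs, one_mul]
    · apply key _ ht
      rw [mul_inv_rev, hs', ht', mul_assoc, mul_assoc, ht, mul_one]
  refine slender_ext (QuotientGroup.mk' (zpowers (s * t))) ?_ ?_
  · rw [QuotientGroup.ker_mk']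
    refine slender_of_cyclic ⟨s * t, mem_zpowers _⟩ ?_
    rw [eq_top_iff]
    rintro ⟨x, k, rfl⟩ -
    exact ⟨k, by ext; simp⟩
  · refine slender_of_cyclic (QuotientGroup.mk' (zpowers (s * t)) s) ?_
    rw [eq_top_iff]
    have h1 : (⊤ : Subgroup (G ⧸ zpowers (s * t))) = (closure {s, t}).map
        (QuotientGroup.mk' (zpowers (s * t))) := by
      rw [h, ← MonoidHom.range_eq_map]
      exact (MonoidHom.range_eq_top.2 (QuotientGroup.mk'_surjective _)).symm
    rw [h1, MonoidHom.map_closure, closure_le]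
    rintro _ ⟨x, (rfl | rfl), rfl⟩
    · exact mem_zpowers _
    · have : QuotientGroup.mk' (zpowers (s * x)) x = QuotientGroup.mk' (zpowers (s * x)) s := by
        symm
        apply QuotientGroup.eq.2
        rw [hs']; exact mem_zpowers _
      rw [this]; exact mem_zpowers _

/-- a group generated by finitely many involutions, each of which commutes with all but at most
one of the others, is slender -/
lemma slender_of_involutions (n : ℕ) : ∀ {G : Type} [Group G] (S : Finset G), S.card ≤ n →
    closure (S : Set G) = ⊤ → (∀ s ∈ S, s * s = 1) →
    (∀ s ∈ S, ∀ t ∈ S, ∀ t' ∈ S, ¬ Commute s t → ¬ Commute s t' → t = t') →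
    Group.Slender G := by
  classical
  induction n with
  | zero =>
    intro G _ S hS hcl _ _
    have : S = ∅ := by simpa using hS
    subst this
    refine slender_of_cyclic (1 : G) ?_
    rw [← hcl]; simp
  | succ n ih =>
    intro G _ S hS hcl hinv hcomm
    by_cases hne : S.Nonempty
    swap
    · rw [Finset.not_nonempty_iff_eq_empty] at hne
      exact ih S (by simp [hne]) hcl hinv hcomm
    obtain ⟨s, hs⟩ := hne
    obtain ⟨t, ht, hst, hts⟩ : ∃ t ∈ S, (∀ u ∈ S, ¬ Commute s u → u = t) ∧
        ∀ u ∈ S, ¬ Commute t u → u = s := by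
      by_cases h : ∃ t ∈ S, ¬ Commute s t
      · obtain ⟨t, ht, hst⟩ := h
        exact ⟨t, ht, fun u hu hsu => hcomm s hs u hu t ht hsu hst,
          fun u hu htu => hcomm t ht u hu s hs htu (fun h' => hst h'.symm)⟩
      · push Not at h
        exact ⟨s, hs, fun u hu hsu => absurd (h u hu) hsu, fun u hu hsu => absurd (h u hu) hsu⟩
    have hn : (closure {s, t}).Normal := by
      rw [← normalizer_eq_top_iff, eq_top_iff, ← hcl, closure_le]
      intro u hu
      by_cases hus : u = s ∨ u = t
      · apply le_normalizer
        rcases hus with rfl | rfl <;> apply Subgroup.subset_closure <;> simp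
      · push Not at hus
        have h1 : Commute s u := by
          by_contra h; exact hus.2 (hst u hu h)
        have h2 : Commute t u := by
          by_contra h; exact hus.1 (hts u hu h)
        apply centralizer_le_normalizer
        change u ∈ centralizer (closure {s, t} : Set G)
        rw [centralizer_closure]
        rw [mem_centralizer_iff]
        rintro x (rfl | rfl)
        · exact h1.eq
        · exact h2.eq
    refine slender_ext (QuotientGroup.mk' (closure {s, t})) ?_ ?_
    · rw [QuotientGroup.ker_mk']
      have h1 : s ∈ closure {s, t} := subset_closure (by simp)
      have h2 : t ∈ closure {s, t} := subset_closure (by simp)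
      refine slender_dihedral (⟨s, h1⟩ : closure {s, t}) ⟨t, h2⟩ (Subtype.ext (hinv s hs))
        (Subtype.ext (hinv t ht)) ?_
      have := closure_closure_coe_preimage (k := ({s, t} : Set G))
      rw [← this]
      congr 1
      ext ⟨x, hx⟩
      simp [Subtype.ext_iff]
    · have hsurj := QuotientGroup.mk'_surjective (closure {s, t})
      have h1 : closure ((S.erase s).image (QuotientGroup.mk' (closure {s, t})) : Set (G ⧸ closure {s, t})) = ⊤ := by
        rw [eq_top_iff, ← MonoidHom.range_eq_top.2 hsurj, MonoidHom.range_eq_map, ← hcl,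
          MonoidHom.map_closure, closure_le]
        rintro _ ⟨x, hx, rfl⟩
        by_cases hxs : x = s
        · have : QuotientGroup.mk' (closure {s, t}) x = 1 :=
            (QuotientGroup.eq_one_iff _).2 (subset_closure (by simp [hxs]))
          rw [this]; exact one_mem _
        · apply Subgroup.subset_closure
          rw [Finset.mem_coe, Finset.mem_image]
          exact ⟨x, Finset.mem_erase.2 ⟨hxs, hx⟩, rfl⟩
      refine ih _ ?_ h1 ?_ ?_
      · refine Finset.card_image_le.trans ?_
        rw [Finset.card_erase_of_mem hs]; omega
      · intro x hx
        obtain ⟨y, hy, rfl⟩ := Finset.mem_image.1 hx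
        rw [← map_mul, hinv y (Finset.mem_of_mem_erase hy), map_one]
      · intro x hx y hy z hz hxy hxz
        obtain ⟨x, hx', rfl⟩ := Finset.mem_image.1 hx
        obtain ⟨y, hy', rfl⟩ := Finset.mem_image.1 hy
        obtain ⟨z, hz', rfl⟩ := Finset.mem_image.1 hz
        rw [hcomm x (Finset.mem_of_mem_erase hx') y (Finset.mem_of_mem_erase hy') z
          (Finset.mem_of_mem_erase hz') (fun h => hxy (h.map _)) (fun h => hxz (h.map _))]
end RACG

namespace RACG
open Subgroup Relation

/-- A relation `T` (adjacency) is tree-like if connected graphs immersed in it embed. -/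
def TreeLike {X : Type} (T : X → X → Prop) : Prop :=
  ∀ (V : Type) (E : V → V → Prop) (φ : V → X), (∀ p q, E p q → E q p) →
    (∀ p q, E p q → T (φ p) (φ q)) →
    (∀ p q r, E p q → E p r → φ q = φ r → q = r) →
    ∀ p q, ReflTransGen E p q → φ p = φ q → p = q

theorem core {X Q H : Type} [Group Q] [Group H] [MulAction H X] (T : X → X → Prop)
    (hT : TreeLike T) (hTinv : ∀ (h : H) x y, T x y → T (h • x) (h • y))
    (π : Q →* H) (F : Set X) (x0 : X) (hx0 : x0 ∈ F) (L : X → Subgroup Q)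
    (Ed : X → Q → X → Prop)
    (hL : ∀ x, ∀ k ∈ L x, π k • x = x)
    (hinj : ∀ x ∈ F, ∀ k ∈ L x, π k = 1 → k = 1)
    (hEdF : ∀ x t y, Ed x t y → x ∈ F ∧ y ∈ F)
    (hEdT : ∀ x t y, Ed x t y → T x (π t • y))
    (hrev : ∀ x t y, Ed x t y → Ed y t⁻¹ x)
    (hloc : ∀ x t t' y l, Ed x t y → Ed x t' y → l ∈ L x → π l • π t • y = π t' • y →
      ∃ m ∈ L y, l * t = t' * m)
    (hconn : ∀ x ∈ F, ReflTransGen (fun a b => Ed a 1 b) x0 x)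
    (hgen : closure ({k | ∃ x ∈ F, k ∈ L x} ∪ {t | ∃ x y, Ed x t y}) = ⊤)
    (hrep : ∀ x ∈ F, ∀ y ∈ F, ∀ h : H, h • x = y → x = y) :
    Function.Injective π := by
  let V := Σ x : X, Q ⧸ L x
  let mk : Q → X → V := fun k x => ⟨x, (k : Q ⧸ L x)⟩
  have mk_eq : ∀ k k' x, mk k x = mk k' x ↔ k⁻¹ * k' ∈ L x := by
    intro k k' x
    rw [← QuotientGroup.eq]
    exact ⟨fun h => eq_of_heq (Sigma.mk.inj h).2, fun h => by simp only [mk, h]⟩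
  let φ : V → X := fun p => Quotient.liftOn' p.2 (fun k => π k • p.1) (by
    intro k k' h
    rw [QuotientGroup.leftRel_apply] at h
    have := hL _ _ h
    rw [map_mul, mul_smul, map_inv, inv_smul_eq_iff] at this
    exact this.symm)
  have hφ : ∀ k x, φ (mk k x) = π k • x := fun k x => rfl
  let E : V → V → Prop := fun p q => ∃ k x t y, Ed x t y ∧ p = mk k x ∧ q = mk (k * t) y
  have hEsymm : ∀ p q, E p q → E q p := by
    rintro p q ⟨k, x, t, y, h, rfl, rfl⟩
    exact ⟨k * t, y, t⁻¹, x, hrev _ _ _ h, rfl, by simp⟩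
  have hET : ∀ p q, E p q → T (φ p) (φ q) := by
    rintro p q ⟨k, x, t, y, h, rfl, rfl⟩
    rw [hφ, hφ, map_mul, mul_smul]
    exact hTinv _ _ _ (hEdT _ _ _ h)
  have hEinj : ∀ p q r, E p q → E p r → φ q = φ r → q = r := by
    rintro p q r ⟨k, x, t, y, h, rfl, rfl⟩ ⟨k', x', t', y', h', hp, rfl⟩ hqr
    have hxx : x = x' := congrArg Sigma.fst hp
    subst hxx
    rw [mk_eq] at hp
    rw [hφ, hφ] at hqr
    have hyy : y' = y := by
      refine hrep y' (hEdF _ _ _ h').2 y (hEdF _ _ _ h).2 ((π (k * t))⁻¹ * π (k' * t')) ?_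
      rw [mul_smul, ← hqr, inv_smul_smul]
    subst hyy
    obtain ⟨m, hm, hmm⟩ := hloc x t' t y' (k⁻¹ * k') h' h hp (by
      simp only [map_mul, map_inv, mul_smul] at hqr ⊢
      rw [← hqr, inv_smul_smul])
    rw [mk_eq]
    have : (k * t)⁻¹ * (k' * t') = m := by
      calc (k * t)⁻¹ * (k' * t') = t⁻¹ * ((k⁻¹ * k') * t') := by group
        _ = m := by rw [hmm]; group
    rw [this]; exact hm
  -- connectivity
  let Rch : V → V → Prop := ReflTransGen E
  have hsym : ∀ p q, Rch p q → Rch q p := by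
    intro p q h
    induction h with
    | refl => exact ReflTransGen.refl
    | tail _ h ih => exact ReflTransGen.head (hEsymm _ _ h) ih
  have hbase : ∀ k, ∀ x ∈ F, Rch (mk k x0) (mk k x) := by
    intro k x hx
    have := hconn x hx
    induction this with
    | refl => exact ReflTransGen.refl
    | tail _ h ih =>
      exact ReflTransGen.tail (ih (hEdF _ _ _ h).1) ⟨k, _, 1, _, h, rfl, by simp⟩
  have hall : ∀ k : Q, ∀ k', Rch (mk k' x0) (mk (k' * k) x0) := by
    intro k
    have hk : k ∈ closure ({k | ∃ x ∈ F, k ∈ L x} ∪ {t | ∃ x y, Ed x t y}) := hgen ▸ mem_top k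
    induction hk using closure_induction with
    | mem k hk =>
      intro k'
      rcases hk with ⟨x, hx, hk⟩ | ⟨x, y, h⟩
      · have : mk k' x = mk (k' * k) x := by rw [mk_eq]; simpa using hk
        refine (hbase k' x hx).trans ?_
        rw [this]
        exact hsym _ _ (hbase _ x hx)
      · refine (hbase k' x (hEdF _ _ _ h).1).trans ?_
        refine ReflTransGen.head ⟨k', x, k, y, h, rfl, rfl⟩ ?_
        exact hsym _ _ (hbase _ y (hEdF _ _ _ h).2)
    | one => intro k'; rw [mul_one]
    | mul a b _ _ iha ihb =>
      intro k'
      rw [← mul_assoc]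
      exact (iha k').trans (ihb _)
    | inv a _ ih =>
      intro k'
      have := ih (k' * a⁻¹)
      rw [inv_mul_cancel_right] at this
      exact hsym _ _ this
  rw [injective_iff_map_eq_one]
  intro k hk
  have h1 := hall k 1
  rw [one_mul] at h1
  have h2 := hT V E φ hEsymm hET hEinj _ _ h1 (by rw [hφ, hφ, hk, map_one])
  rw [mk_eq] at h2
  exact hinj x0 hx0 k (by simpa using h2) hk

lemma exists_finset_closure {G : Type} [Group G] (S : Set G) (h : closure S = ⊤)
    (hfg : Group.FG G) : ∃ S0 : Finset G, (S0 : Set G) ⊆ S ∧ closure (S0 : Set G) = ⊤ := by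
  classical
  have key : ∀ g : G, ∃ S0 : Finset G, (S0 : Set G) ⊆ S ∧ g ∈ closure (S0 : Set G) := by
    intro g
    have hg : g ∈ closure S := h ▸ mem_top g
    induction hg using closure_induction with
    | mem x hx => exact ⟨{x}, by simpa using hx, Subgroup.subset_closure (by simp)⟩
    | one => exact ⟨∅, by simp, one_mem _⟩
    | mul a b _ _ iha ihb =>
      obtain ⟨A, hA, ha⟩ := iha
      obtain ⟨B, hB, hb⟩ := ihb
      refine ⟨A ∪ B, by simp [hA, hB], mul_mem ?_ ?_⟩
      · exact closure_mono (by simp) ha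
      · exact closure_mono (by simp) hb
    | inv a _ ih =>
      obtain ⟨A, hA, ha⟩ := ih
      exact ⟨A, hA, inv_mem ha⟩
  choose f hf hf' using key
  obtain ⟨T, hT⟩ := Group.fg_def.1 hfg
  refine ⟨T.biUnion f, ?_, ?_⟩
  · simpa using fun i _ => hf i
  · rw [eq_top_iff, ← hT, closure_le]
    intro t ht
    refine closure_mono ?_ (hf' t)
    intro x hx
    simp only [Finset.coe_biUnion, Set.mem_iUnion]
    exact ⟨t, ht, hx⟩

/-- generators coming from a finite set of representatives -/
def genSet (H : Type) {X : Type} [Group H] [MulAction H X] (T : X → X → Prop) (F : Finset X) :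
    Set H := {h | ∃ x ∈ F, h • x = x} ∪ {g | ∃ x ∈ F, ∃ y ∈ F, T x (g • y)}

/-- connected finite sets of representatives -/
structure Good (H : Type) {X : Type} [Group H] [MulAction H X] (T : X → X → Prop) (x0 : X)
    (F : Finset X) : Prop where
  base : x0 ∈ F
  rep : ∀ x ∈ F, ∀ y ∈ F, ∀ h : H, h • x = y → x = y
  conn : ∀ x ∈ F, ReflTransGen (fun a b => T a b ∧ a ∈ F ∧ b ∈ F) x0 x

lemma genSet_mono {H X : Type} [Group H] [MulAction H X] {T : X → X → Prop} {F F' : Finset X}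
    (h : F ⊆ F') : genSet H T F ⊆ genSet H T F' := by
  rintro g (⟨x, hx, hg⟩ | ⟨x, hx, y, hy, hg⟩)
  · exact Or.inl ⟨x, h hx, hg⟩
  · exact Or.inr ⟨x, h hx, y, h hy, hg⟩

lemma good_extend {H X : Type} [Group H] [MulAction H X] {T : X → X → Prop}
    (hTinv : ∀ (h : H) x y, T x y → T (h • x) (h • y)) {x0 : X} {F : Finset X}
    (hF : Good H T x0 F) {y : X} (hy : ReflTransGen T x0 y) :
    ∃ F', F ⊆ F' ∧ Good H T x0 F' ∧ ∃ k ∈ closure (genSet H T F'), ∃ f ∈ F', y = k • f := by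
  classical
  induction hy with
  | refl => exact ⟨F, subset_rfl, hF, 1, one_mem _, x0, hF.base, by simp⟩
  | @tail y z _ hyz ih =>
    obtain ⟨F', hFF, hG, k, hk, f, hf, rfl⟩ := ih
    have h1 : T f (k⁻¹ • z) := by
      have := hTinv k⁻¹ _ _ hyz
      rwa [inv_smul_smul] at this
    by_cases h : ∃ g : H, ∃ f' ∈ F', k⁻¹ • z = g • f'
    · obtain ⟨g, f', hf', e⟩ := h
      refine ⟨F', hFF, hG, k * g, mul_mem hk (Subgroup.subset_closure
        (Or.inr ⟨f, hf, f', hf', e ▸ h1⟩)), f', hf', ?_⟩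
      rw [mul_smul, ← e, smul_inv_smul]
    · push Not at h
      refine ⟨insert (k⁻¹ • z) F', hFF.trans (Finset.subset_insert _ _), ⟨?_, ?_, ?_⟩, k,
        closure_mono (genSet_mono (Finset.subset_insert _ _)) hk, k⁻¹ • z, by simp, by simp⟩
      · exact Finset.mem_insert_of_mem hG.base
      · intro a ha b hb g hg
        rw [Finset.mem_insert] at ha hb
        rcases ha with rfl | ha <;> rcases hb with rfl | hb
        · rfl
        · exact absurd (eq_inv_smul_iff.2 hg) (h g⁻¹ b hb)
        · exact absurd hg.symm (h g a ha)
        · exact hG.rep a ha b hb g hg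
      · have hmono : ∀ a, ReflTransGen (fun a b => T a b ∧ a ∈ F' ∧ b ∈ F') x0 a →
            ReflTransGen (fun a b => T a b ∧ a ∈ insert (k⁻¹ • z) F' ∧
              b ∈ insert (k⁻¹ • z) F') x0 a := fun a ha =>
          ReflTransGen.mono (fun a b hab => ⟨hab.1, Finset.mem_insert_of_mem hab.2.1,
            Finset.mem_insert_of_mem hab.2.2⟩) _ _ ha
        intro a ha
        rw [Finset.mem_insert] at ha
        rcases ha with rfl | ha
        · exact (hmono f (hG.conn f hf)).tail ⟨h1, Finset.mem_insert_of_mem hf, by simp⟩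
        · exact hmono a (hG.conn a ha)

lemma exists_good {H X : Type} [Group H] [MulAction H X] {T : X → X → Prop}
    (hTinv : ∀ (h : H) x y, T x y → T (h • x) (h • y)) (x0 : X)
    (hconn : ∀ h : H, ReflTransGen T x0 (h • x0)) (hfg : Group.FG H) :
    ∃ F, Good H T x0 F ∧ closure (genSet H T F) = ⊤ := by
  classical
  have key : ∀ S : Finset H, ∃ F, Good H T x0 F ∧ ∀ s ∈ S, s ∈ closure (genSet H T F) := by
    intro S
    induction S using Finset.induction_on with
    | empty =>
      refine ⟨{x0}, ⟨by simp, ?_, ?_⟩, by simp⟩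
      · simp
      · intro x hx
        rw [Finset.mem_singleton] at hx
        subst hx; exact ReflTransGen.refl
    | insert s S _ ih =>
      obtain ⟨F, hF, hS⟩ := ih
      obtain ⟨F', hFF, hG, k, hk, f, hf, e⟩ := good_extend hTinv hF (hconn s)
      refine ⟨F', hG, ?_⟩
      intro t ht
      rw [Finset.mem_insert] at ht
      rcases ht with rfl | ht
      · have hfx : x0 = f := hG.rep x0 hG.base f hf (k⁻¹ * t) (by
          rw [mul_smul, e, inv_smul_smul])
        subst hfx
        have : k⁻¹ * t ∈ closure (genSet H T F') := Subgroup.subset_closure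
          (Or.inl ⟨x0, hf, by rw [mul_smul, e, inv_smul_smul]⟩)
        have := mul_mem hk this
        rwa [mul_inv_cancel_left] at this
      · exact closure_mono (genSet_mono hFF) (hS t ht)
  obtain ⟨S, hS⟩ := Group.fg_def.1 hfg
  obtain ⟨F, hF, h⟩ := key S
  refine ⟨F, hF, ?_⟩
  rw [eq_top_iff, ← hS, closure_le]
  exact fun s hs => h s hs

end RACG

namespace RACG
open Subgroup Relation

theorem karrassSolitar {X H : Type} [Group H] [MulAction H X] (T : X → X → Prop)
    (hT : TreeLike T) (hTsymm : ∀ x y, T x y → T y x)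
    (hTinv : ∀ (h : H) x y, T x y → T (h • x) (h • y)) (x0 : X)
    (hconn : ∀ h : H, ReflTransGen T x0 (h • x0)) (hfg : Group.FG H)
    (hcoh : ∀ x : X, Group.Coherent (MulAction.stabilizer H x))
    (hsl : ∀ x y : X, T x y →
      (MulAction.stabilizer H x ⊓ MulAction.stabilizer H y : Subgroup H).FG) :
    Group.FinitelyPresented H := by
  classical
  obtain ⟨F, hF, hFgen⟩ := exists_good hTinv x0 hconn hfg
  obtain ⟨S0, hS0, hS0gen⟩ := exists_finset_closure _ hFgen hfg
  let S1 : Finset H := S0 ∪ S0.image (·⁻¹) ∪ {1}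
  have h1S1 : (1 : H) ∈ S1 := by simp [S1]
  have hS0S1 : S0 ⊆ S1 := fun s hs => by simp [S1, hs]
  have hinvS1 : ∀ s ∈ S1, s⁻¹ ∈ S1 := by
    intro s hs
    simp only [S1, Finset.mem_union, Finset.mem_image, Finset.mem_singleton] at hs ⊢
    rcases hs with (hs | ⟨a, ha, rfl⟩) | rfl
    · exact Or.inl (Or.inr ⟨s, hs, rfl⟩)
    · simp [ha]
    · simp
  have hrevT : ∀ x y (g : H), T x (g • y) → T y (g⁻¹ • x) := by
    intro x y g h
    have := hTinv g⁻¹ _ _ (hTsymm _ _ h)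
    rwa [inv_smul_smul] at this
  have hS1 : ∀ s ∈ S1, (∃ x ∈ F, s • x = x) ∨ ∃ x ∈ F, ∃ y ∈ F, T x (s • y) := by
    intro s hs
    simp only [S1, Finset.mem_union, Finset.mem_image, Finset.mem_singleton] at hs
    rcases hs with (hs | ⟨a, ha, rfl⟩) | rfl
    · exact hS0 hs
    · rcases hS0 ha with ⟨x, hx, h⟩ | ⟨x, hx, y, hy, h⟩
      · exact Or.inl ⟨x, hx, inv_smul_eq_iff.2 h.symm⟩
      · exact Or.inr ⟨y, hy, x, hx, hrevT _ _ _ h⟩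
    · exact Or.inl ⟨x0, hF.base, one_smul _ _⟩
  -- generators of edge groups
  have hM0 : ∀ x z : X, ∃ M : Finset H, (∀ c ∈ M, c • x = x ∧ c • z = z) ∧
      (T x z → closure (M : Set H) = MulAction.stabilizer H x ⊓ MulAction.stabilizer H z) := by
    intro x z
    by_cases h : T x z
    · obtain ⟨M, hM⟩ := hsl x z h
      refine ⟨M, fun c hc => ?_, fun _ => hM⟩
      have : c ∈ MulAction.stabilizer H x ⊓ MulAction.stabilizer H z :=
        hM ▸ Subgroup.subset_closure hc
      exact this
    · exact ⟨∅, by simp, fun h' => absurd h' h⟩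
  choose M0 hM0 hM0' using hM0
  -- identifications of edges
  have hM1 : ∀ (x y : X) (g g' : H), ∃ M : Finset H, (∀ m ∈ M, m • x = x ∧ m • g • y = g' • y) ∧
      ((∃ h : H, h • x = x ∧ h • g • y = g' • y) → M.Nonempty) := by
    intro x y g g'
    by_cases h : ∃ h : H, h • x = x ∧ h • g • y = g' • y
    · obtain ⟨h, h1, h2⟩ := h
      exact ⟨{h}, by simp [h1, h2], fun _ => by simp⟩
    · exact ⟨∅, by simp, fun h' => absurd h' h⟩
  choose M1 hM1 hM1' using hM1
  let B : (X × X) × (H × H) → Finset H := fun p =>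
    M0 p.1.1 (p.2.1 • p.1.2) ∪ (M0 p.1.1 (p.2.1 • p.1.2)).image (fun c => p.2.1⁻¹ * c * p.2.1) ∪
    (M1 p.1.1 p.1.2 p.2.1 p.2.2 ∪
      (M1 p.1.1 p.1.2 p.2.1 p.2.2).image (fun m => p.2.2⁻¹ * m * p.2.1))
  obtain ⟨S, hSdef⟩ : ∃ S : Finset H, S = S1 ∪ ((F ×ˢ F) ×ˢ (S1 ×ˢ S1)).biUnion B := ⟨_, rfl⟩
  have hS1S : S1 ⊆ S := hSdef ▸ Finset.subset_union_left
  have hBS : ∀ x ∈ F, ∀ y ∈ F, ∀ g ∈ S1, ∀ g' ∈ S1, B ((x, y), (g, g')) ⊆ S := by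
    intro x hx y hy g hg g' hg' b hb
    rw [hSdef]
    refine Finset.mem_union_right _ (Finset.mem_biUnion.2 ⟨((x, y), (g, g')), ?_, hb⟩)
    simp [hx, hy, hg, hg']
  have hS : ∀ s ∈ S, (∃ x ∈ F, s • x = x) ∨ (s ∈ S1 ∧ ∃ x ∈ F, ∃ y ∈ F, T x (s • y)) := by
    intro s hs
    rw [hSdef, Finset.mem_union] at hs
    rcases hs with hs | hs
    · exact (hS1 s hs).imp id (fun h => ⟨hs, h⟩)
    · left
      obtain ⟨⟨⟨x, y⟩, ⟨g, g'⟩⟩, hp, hs⟩ := Finset.mem_biUnion.1 hs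
      simp only [Finset.mem_product] at hp
      simp only [B, Finset.mem_union, Finset.mem_image] at hs
      rcases hs with (hs | ⟨c, hc, rfl⟩) | (hs | ⟨c, hc, rfl⟩)
      · exact ⟨x, hp.1.1, (hM0 _ _ _ hs).1⟩
      · refine ⟨y, hp.1.2, ?_⟩
        rw [mul_smul, mul_smul, (hM0 _ _ _ hc).2, inv_smul_smul]
      · exact ⟨x, hp.1.1, (hM1 _ _ _ _ _ hs).1⟩
      · refine ⟨y, hp.1.2, ?_⟩
        rw [mul_smul, mul_smul, (hM1 _ _ _ _ _ hc).2, inv_smul_smul]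
  -- the free group
  let ev : FreeGroup S →* H := FreeGroup.lift Subtype.val
  have hev : Function.Surjective ev := by
    rw [← MonoidHom.range_eq_top, eq_top_iff, ← hS0gen, closure_le]
    intro s hs
    exact ⟨FreeGroup.of ⟨s, hS1S (hS0S1 hs)⟩, by simp [ev]⟩
  -- vertex groups
  let Sx : X → Type := fun x => {s : S // (s : H) • x = x}
  let inc : ∀ x, FreeGroup (Sx x) →* FreeGroup S := fun x => FreeGroup.map Subtype.val
  let fx : ∀ x, FreeGroup (Sx x) →* MulAction.stabilizer H x := fun x =>
    FreeGroup.lift (fun s => ⟨(s.1 : H), s.2⟩)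
  have hfx : ∀ x u, ((fx x u : MulAction.stabilizer H x) : H) = ev (inc x u) := by
    intro x u
    have : (MulAction.stabilizer H x).subtype.comp (fx x) = ev.comp (inc x) := by
      ext s; simp [fx, ev, inc]
    exact DFunLike.congr_fun this u
  have hRx : ∀ x, ∃ R : Set (FreeGroup (Sx x)), R.Finite ∧ normalClosure R = (fx x).ker := by
    intro x
    have : Finite (Sx x) := by dsimp only [Sx]; infer_instance
    have h1 : Group.FinitelyPresented (fx x).range := hcoh x _ (by
      rw [← Group.fg_iff_subgroup_fg]; infer_instance)
    obtain ⟨R, hR, hR'⟩ := ker_of_fp (fx x).rangeRestrict (fx x).rangeRestrict_surjective h1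
    exact ⟨R, hR, by rw [hR', MonoidHom.ker_rangeRestrict]⟩
  choose Rx hRxfin hRx using hRx
  let R3 : Set (FreeGroup S) := Set.range fun p : S × S × S =>
    FreeGroup.of p.1 * FreeGroup.of p.2.1 * (FreeGroup.of p.2.2)⁻¹
  let R4 : Set (FreeGroup S) := Set.range fun p : S × S × S × S =>
    FreeGroup.of p.1 * FreeGroup.of p.2.1 * (FreeGroup.of p.2.2.1 * FreeGroup.of p.2.2.2)⁻¹
  let R : Set (FreeGroup S) := ((R3 ∪ R4) ∩ {w | ev w = 1}) ∪ ⋃ x ∈ F, inc x '' Rx x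
  have hRfin : R.Finite := by
    refine Set.Finite.union (Set.Finite.subset
      ((Set.finite_range _).union (Set.finite_range _)) Set.inter_subset_left) ?_
    exact Set.Finite.biUnion F.finite_toSet (fun x _ => (hRxfin x).image _)
  have hRker : normalClosure R ≤ ev.ker := by
    apply normalClosure_le_normal
    rintro w (⟨_, hw⟩ | hw)
    · exact hw
    · simp only [Set.mem_iUnion] at hw
      obtain ⟨x, hx, u, hu, rfl⟩ := hw
      have : u ∈ (fx x).ker := hRx x ▸ subset_normalClosure hu
      change ev _ = 1
      rw [← hfx, this]; rfl
  let Q := FreeGroup S ⧸ normalClosure R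
  let mk : FreeGroup S →* Q := QuotientGroup.mk' (normalClosure R)
  let π : Q →* H := QuotientGroup.lift (normalClosure R) ev hRker
  have hπmk : ∀ w, π (mk w) = ev w := fun w => rfl
  let σ : S → Q := fun s => mk (FreeGroup.of s)
  have hπσ : ∀ s, π (σ s) = s := fun s => by simp [σ, hπmk, ev]
  have rel3 : ∀ a b c : S, (a * b : H) = c → σ a * σ b = σ c := by
    intro a b c h
    have : mk (FreeGroup.of a * FreeGroup.of b * (FreeGroup.of c)⁻¹) = 1 := by
      refine (QuotientGroup.eq_one_iff _).2 (subset_normalClosure (Or.inl ⟨Or.inl ⟨(a, b, c), rfl⟩, ?_⟩))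
      change ev _ = 1
      simp [ev, h]
    rw [map_mul, map_mul, map_inv, mul_inv_eq_one] at this
    exact this
  have rel4 : ∀ a b c d : S, (a * b : H) = c * d → σ a * σ b = σ c * σ d := by
    intro a b c d h
    have : mk (FreeGroup.of a * FreeGroup.of b * (FreeGroup.of c * FreeGroup.of d)⁻¹) = 1 := by
      refine (QuotientGroup.eq_one_iff _).2
        (subset_normalClosure (Or.inl ⟨Or.inr ⟨(a, b, c, d), rfl⟩, ?_⟩))
      change ev _ = 1
      rw [map_mul, map_mul, map_inv, map_mul, mul_inv_eq_one]
      simpa [ev] using h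
    rw [map_mul, map_mul, map_inv, map_mul, mul_inv_eq_one] at this
    exact this
  have σ1 : σ ⟨1, hS1S h1S1⟩ = 1 := by
    have := rel3 ⟨1, hS1S h1S1⟩ ⟨1, hS1S h1S1⟩ ⟨1, hS1S h1S1⟩ (by simp)
    simpa using this
  let L : X → Subgroup Q := fun x => (mk.comp (inc x)).range
  have hσL : ∀ (s : S) x, (s : H) • x = x → σ s ∈ L x := by
    intro s x h
    exact ⟨FreeGroup.of ⟨s, h⟩, by simp [inc, σ]⟩
  let Ed : X → Q → X → Prop := fun x t y => ∃ (g : H) (hg : g ∈ S1), x ∈ F ∧ y ∈ F ∧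
    T x (g • y) ∧ t = σ ⟨g, hS1S hg⟩
  have hLinj : ∀ x ∈ F, ∀ k ∈ L x, π k = 1 → k = 1 := by
    rintro x hx _ ⟨u, rfl⟩ hk
    rw [MonoidHom.comp_apply, hπmk, ← hfx] at hk
    have hu : u ∈ normalClosure (Rx x) := by
      rw [hRx]; exact Subtype.ext hk
    have : normalClosure (Rx x) ≤ (normalClosure R).comap (inc x) := by
      apply normalClosure_le_normal
      intro r hr
      refine subset_normalClosure (Or.inr ?_)
      simp only [Set.mem_iUnion]
      exact ⟨x, hx, r, hr, rfl⟩
    exact (QuotientGroup.eq_one_iff _).2 (this hu)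
  have hπ : Function.Injective π := by
    refine core T hT hTinv π (F : Set X) x0 hF.base L Ed ?_ hLinj ?_ ?_ ?_ ?_ ?_ ?_ hF.rep
    · rintro x _ ⟨u, rfl⟩
      rw [MonoidHom.comp_apply, hπmk, ← hfx]
      exact (fx x u).2
    · rintro x t y ⟨g, hg, hx, hy, -⟩
      exact ⟨hx, hy⟩
    · rintro x t y ⟨g, hg, hx, hy, h, rfl⟩
      rw [hπσ]; exact h
    · rintro x t y ⟨g, hg, hx, hy, h, rfl⟩
      refine ⟨g⁻¹, hinvS1 g hg, hy, hx, hrevT _ _ _ h, ?_⟩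
      apply inv_eq_of_mul_eq_one_right
      rw [rel3 ⟨g, hS1S hg⟩ ⟨g⁻¹, hS1S (hinvS1 g hg)⟩ ⟨1, hS1S h1S1⟩ (by simp), σ1]
    · rintro x _ _ y l ⟨g, hg, hx, hy, h, rfl⟩ ⟨g', hg', -, -, h', rfl⟩ hl hll
      rw [hπσ, hπσ] at hll
      simp only at hll
      have hlx : π l • x = x := by
        obtain ⟨u, rfl⟩ := hl
        rw [MonoidHom.comp_apply, hπmk, ← hfx]
        exact (fx x u).2
      have hB := hBS x hx y hy g hg g' hg'
      have claim : ∀ c ∈ closure (M0 x (g • y) : Set H), ∃ c' ∈ L x, ∃ d ∈ L y,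
          π c' = c ∧ c' * σ ⟨g, hS1S hg⟩ = σ ⟨g, hS1S hg⟩ * d := by
        intro c hc
        induction hc using closure_induction with
        | mem c hc =>
          have hc1 : c ∈ S := hB (by
            simp only [B, Finset.mem_union]; exact Or.inl (Or.inl hc))
          have hc2 : g⁻¹ * c * g ∈ S := hB (by
            simp only [B, Finset.mem_union, Finset.mem_image]
            exact Or.inl (Or.inr ⟨c, hc, rfl⟩))
          refine ⟨σ ⟨c, hc1⟩, hσL _ _ (hM0 _ _ _ hc).1, σ ⟨_, hc2⟩, hσL _ _ ?_, hπσ _,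
            rel4 _ _ _ _ ?_⟩
          · simp only
            rw [mul_smul, mul_smul, (hM0 _ _ _ hc).2, inv_smul_smul]
          · simp only; group
        | one => exact ⟨1, one_mem _, 1, one_mem _, map_one _, by simp⟩
        | mul a b _ _ iha ihb =>
          obtain ⟨a', ha', da, hda, rfl, ea⟩ := iha
          obtain ⟨b', hb', db, hdb, rfl, eb⟩ := ihb
          exact ⟨a' * b', mul_mem ha' hb', da * db, mul_mem hda hdb, map_mul _ _ _, by
            rw [mul_assoc, eb, ← mul_assoc, ea, mul_assoc]⟩
        | inv a _ iha =>
          obtain ⟨a', ha', da, hda, rfl, ea⟩ := iha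
          exact ⟨a'⁻¹, inv_mem ha', da⁻¹, inv_mem hda, map_inv _ _, by
            rw [inv_mul_eq_iff_eq_mul, ← mul_assoc, ea, mul_inv_cancel_right]⟩
      obtain ⟨m, hm⟩ := hM1' x y g g' ⟨π l, hlx, hll⟩
      have hm' := hM1 _ _ _ _ _ hm
      have hc : m⁻¹ * π l ∈ closure (M0 x (g • y) : Set H) := by
        rw [hM0' _ _ h]
        constructor
        · change (m⁻¹ * π l) • x = x
          rw [mul_smul, hlx, inv_smul_eq_iff, hm'.1]
        · change (m⁻¹ * π l) • g • y = g • y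
          rw [mul_smul, hll, inv_smul_eq_iff, hm'.2]
      obtain ⟨c', hc', d, hd, hcπ, e⟩ := claim _ hc
      have hm1 : m ∈ S := hB (by
        simp only [B, Finset.mem_union]; exact Or.inr (Or.inl hm))
      have hm2 : g'⁻¹ * m * g ∈ S := hB (by
        simp only [B, Finset.mem_union, Finset.mem_image]
        exact Or.inr (Or.inr ⟨m, hm, rfl⟩))
      have hl' : l = σ ⟨m, hm1⟩ * c' := by
        have h1 : l⁻¹ * (σ ⟨m, hm1⟩ * c') ∈ L x :=
          mul_mem (inv_mem hl) (mul_mem (hσL _ _ hm'.1) hc')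
        have h2 := hLinj x hx _ h1 (by
          rw [map_mul, map_mul, map_inv, hcπ, hπσ]; group)
        exact inv_mul_eq_one.1 h2
      refine ⟨σ ⟨_, hm2⟩ * d, mul_mem (hσL _ _ ?_) hd, ?_⟩
      · simp only
        rw [mul_smul, mul_smul, hm'.2, inv_smul_smul]
      · rw [hl', mul_assoc, e, ← mul_assoc, ← mul_assoc]
        congr 1
        apply rel4
        simp only; group
    · intro x hx
      refine ReflTransGen.mono ?_ _ _ (hF.conn x hx)
      rintro a b ⟨hab, ha, hb⟩
      exact ⟨1, h1S1, ha, hb, by rwa [one_smul], σ1.symm⟩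
    · rw [eq_top_iff, ← MonoidHom.range_eq_top.2 (QuotientGroup.mk'_surjective (normalClosure R)),
        MonoidHom.range_eq_map, ← FreeGroup.closure_range_of, MonoidHom.map_closure, closure_le]
      rintro _ ⟨_, ⟨s, rfl⟩, rfl⟩
      apply Subgroup.subset_closure
      rcases hS s s.2 with ⟨x, hx, h⟩ | ⟨h1, x, hx, y, hy, h⟩
      · exact Or.inl ⟨x, hx, hσL s x h⟩
      · exact Or.inr ⟨x, y, s, h1, hx, hy, h, rfl⟩
  refine fp_of_ker ev hev ⟨R, hRfin, le_antisymm hRker ?_⟩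
  intro w hw
  refine (QuotientGroup.eq_one_iff _).1 (hπ ?_ : mk w = 1)
  rw [hπmk, map_one]; exact hw

end RACG

namespace RACG
open Subgroup Relation

/-- The group of order two. -/
abbrev C2 : Type := Multiplicative (ZMod 2)

theorem c2_cases (x : C2) : x = 1 ∨ x = Multiplicative.ofAdd 1 := by
  revert x; decide

theorem c2_ne : (Multiplicative.ofAdd 1 : C2) ≠ 1 := by decide

/-- The homomorphism from the group of order two determined by an involution. -/
def c2hom {K : Type} [Group K] (k : K) (hk : k * k = 1) : C2 →* K where
  toFun x := if x = 1 then 1 else k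
  map_one' := by simp
  map_mul' x y := by
    have h : (Multiplicative.ofAdd 1 * Multiplicative.ofAdd 1 : C2) = 1 := by decide
    rcases c2_cases x with rfl | rfl <;> rcases c2_cases y with rfl | rfl <;>
      simp [h, hk]

/-- The free product of copies of the group of order two. -/
abbrev FP2 (I : Type) : Type := Monoid.CoprodI (fun _ : I => C2)

/-- The standard generators. -/
def gen {I : Type} (i : I) : FP2 I :=
  Monoid.CoprodI.of (M := fun _ : I => C2) (i := i) (Multiplicative.ofAdd 1)

theorem gen_mul_gen {I : Type} (i : I) : gen i * gen i = 1 := by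
  unfold gen
  rw [← map_mul]
  have h : (Multiplicative.ofAdd 1 * Multiplicative.ofAdd 1 : C2) = 1 := by decide
  rw [h, map_one]

theorem fp2_hom_ext {I : Type} {K : Type} [Group K] (f g : FP2 I →* K)
    (h : ∀ i, f (gen i) = g (gen i)) : f = g := by
  apply Monoid.CoprodI.ext_hom
  intro i
  refine MonoidHom.ext fun x => ?_
  rcases c2_cases x with rfl | rfl
  · simp
  · exact h i

/-- The universal property. -/
def lft {I K : Type} [Group K] (f : I → K) (hf : ∀ i, f i * f i = 1) : FP2 I →* K :=
  Monoid.CoprodI.lift (fun i => c2hom (f i) (hf i))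

theorem lft_gen {I K : Type} [Group K] (f : I → K) (hf : ∀ i, f i * f i = 1) (i : I) :
    lft f hf (gen i) = f i := by
  unfold lft gen
  rw [Monoid.CoprodI.lift_of]
  simp [c2hom]

theorem gen_injective {I : Type} : Function.Injective (gen : I → FP2 I) := by
  classical
  intro i j h
  by_contra hij
  have := congrArg (lft (K := C2) (fun k => if k = i then Multiplicative.ofAdd 1 else 1)
    (by intro k; split <;> decide)) h
  rw [lft_gen, lft_gen, if_pos rfl, if_neg (Ne.symm hij)] at this
  exact c2_ne this

/-- Edges of the Cayley graph. -/
def Cay {I : Type} (n m : FP2 I) : Prop := ∃ i, m = n * gen i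

theorem cay_symm {I : Type} (n m : FP2 I) (h : Cay n m) : Cay m n := by
  obtain ⟨i, rfl⟩ := h
  exact ⟨i, by rw [mul_assoc, gen_mul_gen, mul_one]⟩

theorem cay_conn {I : Type} (n : FP2 I) : ReflTransGen Cay 1 n := by
  have key : ∀ m : FP2 I, ReflTransGen Cay m (m * n) := by
    induction n using Monoid.CoprodI.induction_on with
    | one => intro m; rw [mul_one]
    | of i x =>
      intro m
      rcases c2_cases x with rfl | rfl
      · rw [map_one, mul_one]
      · exact ReflTransGen.single ⟨i, rfl⟩
    | mul x y hx hy =>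
      intro m
      rw [← mul_assoc]
      exact (hx m).trans (hy _)
  simpa using key 1

/-- Non-backtracking paths, labelled by reduced words. -/
inductive NBPath {I V : Type} (E : V → V → Prop) (φ : V → FP2 I) :
    V → V → Monoid.CoprodI.Word (fun _ : I => C2) → Prop
  | nil (p : V) : NBPath E φ p p Monoid.CoprodI.Word.empty
  | cons (p p' q : V) (i : I) (w : Monoid.CoprodI.Word (fun _ : I => C2))
      (hw : w.fstIdx ≠ some i) (hE : E p p') (hφ : φ p' = φ p * gen i)
      (h : NBPath E φ p' q w) :
      NBPath E φ p q (Monoid.CoprodI.Word.cons (i := i) (Multiplicative.ofAdd 1) w hw c2_ne)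

theorem NBPath.prod_eq {I V : Type} {E : V → V → Prop} {φ : V → FP2 I} {p q w}
    (h : NBPath E φ p q w) : φ q = φ p * w.prod := by
  classical
  induction h with
  | nil p => simp
  | cons p p' q i w hw hE hφ h ih =>
    rw [ih, hφ, Monoid.CoprodI.Word.prod_cons, ← mul_assoc]; rfl

theorem NBPath.eq_of_empty {I V : Type} {E : V → V → Prop} {φ : V → FP2 I} {p q w}
    (h : NBPath E φ p q w) (hw : w = Monoid.CoprodI.Word.empty) : p = q := by
  cases h with
  | nil p => rfl
  | cons p p' q i w hw' hE hφ h =>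
    have := congrArg Monoid.CoprodI.Word.toList hw
    simp [Monoid.CoprodI.Word.cons, Monoid.CoprodI.Word.empty] at this

theorem cay_treeLike {I : Type} : TreeLike (Cay (I := I)) := by
  classical
  intro V E φ hsymm hT hinj p q hpq hφ
  have key : ∃ w, NBPath E φ p q w := by
    clear hφ
    induction hpq using ReflTransGen.head_induction_on with
    | refl => exact ⟨_, NBPath.nil q⟩
    | head hab hbc ih =>
      rename_i a b
      obtain ⟨w, hw⟩ := ih
      obtain ⟨i, hi⟩ := hT _ _ hab
      by_cases hf : w.fstIdx = some i
      · cases hw with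
        | nil => simp [Monoid.CoprodI.Word.fstIdx, Monoid.CoprodI.Word.empty] at hf
        | cons p p' q j w' hw' hE hφ' h =>
          rw [Monoid.CoprodI.Word.fstIdx_cons] at hf
          obtain rfl := Option.some.inj hf
          have : p' = a := by
            apply hinj b _ _ hE (hsymm _ _ hab)
            rw [hφ', hi, mul_assoc, gen_mul_gen, mul_one]
          subst this
          exact ⟨_, h⟩
      · exact ⟨_, NBPath.cons a b q i w hf hab hi hw⟩
  obtain ⟨w, hw⟩ := key
  apply hw.eq_of_empty
  have h1 := hw.prod_eq
  rw [← hφ] at h1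
  have h2 : w.prod = 1 := by
    have := mul_left_cancel (a := φ p) (b := 1) (c := w.prod) (by rw [mul_one]; exact h1)
    exact this.symm
  apply (Monoid.CoprodI.Word.equiv (M := fun _ : I => C2)).symm.injective
  exact h2

section Action
variable {A I : Type} [Group A] [MulAction A I]

/-- Endomorphism permuting the generators. -/
def permHom (a : A) : FP2 I →* FP2 I := lft (fun i => gen (a • i)) (fun _ => gen_mul_gen _)

theorem permHom_gen (a : A) (i : I) : permHom a (gen i) = gen (a • i) := lft_gen _ _ _

theorem permHom_mul (a b : A) : (permHom (a * b) : FP2 I →* FP2 I) =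
    (permHom a).comp (permHom b) := by
  apply fp2_hom_ext
  intro i
  rw [MonoidHom.comp_apply, permHom_gen, permHom_gen, permHom_gen, mul_smul]

theorem permHom_one : (permHom (1 : A) : FP2 I →* FP2 I) = MonoidHom.id _ := by
  apply fp2_hom_ext
  intro i
  rw [permHom_gen, one_smul]; rfl

variable (A I) in
/-- The permutation action by automorphisms. -/
def permAut : A →* MulAut (FP2 I) where
  toFun a := MonoidHom.toMulEquiv (permHom a) (permHom a⁻¹)
    (by rw [← permHom_mul, inv_mul_cancel, permHom_one])
    (by rw [← permHom_mul, mul_inv_cancel, permHom_one])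
  map_one' := by
    ext x
    exact DFunLike.congr_fun permHom_one x
  map_mul' a b := by
    ext x
    exact DFunLike.congr_fun (permHom_mul a b) x

theorem permAut_gen (a : A) (i : I) : permAut A I a (gen i) = gen (a • i) := permHom_gen a i

/-- The semidirect product acts on the free product. -/
@[reducible] def sdAct : MulAction (FP2 I ⋊[permAut A I] A) (FP2 I) where
  smul g m := g.left * permAut A I g.right m
  one_smul m := by
    change (1 : FP2 I ⋊[permAut A I] A).left * permAut A I (1 : FP2 I ⋊[permAut A I] A).right m = m
    simp
  mul_smul g h m := by
    change (g * h).left * permAut A I (g * h).right m =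
      g.left * permAut A I g.right (h.left * permAut A I h.right m)
    simp [mul_assoc]

theorem semidirect_coherent (hA : Group.Coherent A)
    (hsl : ∀ i : I, Group.Slender (MulAction.stabilizer A i)) :
    Group.Coherent (FP2 I ⋊[permAut A I] A) := by
  intro H hH
  letI : MulAction (FP2 I ⋊[permAut A I] A) (FP2 I) := sdAct
  have smul_def : ∀ (g : H) (m : FP2 I), g • m = g.1.left * permAut A I g.1.right m :=
    fun _ _ => rfl
  have hinj : ∀ (x : FP2 I) (g h : H), g • x = x → h • x = x → g.1.right = h.1.right → g = h := by
    intro x g h hg hh hr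
    apply Subtype.ext
    apply SemidirectProduct.ext _ hr
    rw [smul_def] at hg hh
    rw [hr] at hg
    exact mul_right_cancel (hg.trans hh.symm)
  refine karrassSolitar (X := FP2 I) (H := H) Cay cay_treeLike cay_symm ?_ 1
    (fun h => cay_conn _) ((Group.fg_iff_subgroup_fg H).2 hH) ?_ ?_
  · rintro h x y ⟨i, rfl⟩
    refine ⟨h.1.right • i, ?_⟩
    rw [smul_def, smul_def, map_mul, permAut_gen, mul_assoc]
  · intro x
    refine coherent_of_injective
      ((SemidirectProduct.rightHom.comp H.subtype).comp (MulAction.stabilizer H x).subtype) ?_ hA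
    intro g h hgh
    exact Subtype.ext (hinj x g.1 h.1 g.2 h.2 hgh)
  · rintro x y ⟨i, rfl⟩
    set S : Subgroup H := MulAction.stabilizer H x ⊓ MulAction.stabilizer H (x * gen i) with hS
    have hmem : ∀ g : S, g.1.1.right ∈ MulAction.stabilizer A i := by
      intro g
      have h1 : g.1 • x = x := g.2.1
      have h2 : g.1 • (x * gen i) = x * gen i := g.2.2
      rw [smul_def] at h1 h2
      rw [map_mul, permAut_gen, ← mul_assoc, h1] at h2
      exact gen_injective (mul_left_cancel h2)
    let f : S →* MulAction.stabilizer A i :=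
      ((SemidirectProduct.rightHom.comp H.subtype).comp S.subtype).codRestrict _ hmem
    have hf : Function.Injective f := by
      intro g h hgh
      exact Subtype.ext (hinj x g.1 h.1 g.2.1 h.2.1 (congrArg Subtype.val hgh))
    have := slender_of_injective f hf (hsl i) ⊤
    exact (Group.fg_iff_subgroup_fg S).1 ⟨this⟩

end Action
end RACG

namespace RACG
open Subgroup Relation

section
variable {V : Type} [DecidableEq V] (Γ : SimpleGraph V) [DecidableRel Γ.Adj]

/-- The Coxeter generators. -/
def sg (v : V) : Γ.racg := Γ.coxeterMatrix.simple v

theorem sg_mul_self (v : V) : sg Γ v * sg Γ v = 1 :=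
  Γ.coxeterMatrix.toCoxeterSystem.simple_mul_simple_self v

theorem sg_comm {v w : V} (h : Γ.Adj v w) : sg Γ v * sg Γ w = sg Γ w * sg Γ v := by
  have h1 := Γ.coxeterMatrix.toCoxeterSystem.simple_mul_simple_pow v w
  have hM : Γ.coxeterMatrix v w = 2 := by
    change (if v = w then 1 else if Γ.Adj v w then 2 else 0) = 2
    rw [if_neg h.ne, if_pos h]
  rw [hM] at h1
  have h2 : (sg Γ v * sg Γ w) * (sg Γ v * sg Γ w) = 1 := by
    rw [← pow_two]; exact h1
  have e1 : (sg Γ v)⁻¹ = sg Γ v := inv_eq_of_mul_eq_one_left (sg_mul_self Γ v)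
  have e2 : (sg Γ w)⁻¹ = sg Γ w := inv_eq_of_mul_eq_one_left (sg_mul_self Γ w)
  calc sg Γ v * sg Γ w = (sg Γ v * sg Γ w)⁻¹ := eq_inv_of_mul_eq_one_left h2
    _ = sg Γ w * sg Γ v := by rw [mul_inv_rev, e1, e2]

theorem sg_closure : Subgroup.closure (Set.range (sg Γ)) = ⊤ :=
  Γ.coxeterMatrix.toCoxeterSystem.subgroup_closure_range_simple

theorem sg_ext {K : Type} [Group K] (f g : Γ.racg →* K) (h : ∀ v, f (sg Γ v) = g (sg Γ v)) :
    f = g :=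
  Γ.coxeterMatrix.toCoxeterSystem.ext_simple h

theorem sg_lift {K : Type} [Group K] (f : V → K) (h1 : ∀ v, f v * f v = 1)
    (h2 : ∀ v w, Γ.Adj v w → f v * f w = f w * f v) :
    ∃ F : Γ.racg →* K, ∀ v, F (sg Γ v) = f v := by
  have hl : Γ.coxeterMatrix.IsLiftable f := by
    intro v w
    change (f v * f w) ^ (if v = w then 1 else if Γ.Adj v w then 2 else 0) = 1
    split
    · rename_i h
      subst h
      rw [pow_one, h1]
    · split
      · rename_i h
        rw [pow_two, mul_assoc, ← mul_assoc (f w), ← h2 v w h, mul_assoc (f v), h1, mul_one, h1]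
      · rw [pow_zero]
  exact ⟨Γ.coxeterMatrix.toCoxeterSystem.lift ⟨f, hl⟩,
    fun v => Γ.coxeterMatrix.toCoxeterSystem.lift_apply_simple hl v⟩

end

theorem coherent_step {V : Type} [Fintype V] [DecidableEq V] (Γ : SimpleGraph V)
    [DecidableRel Γ.Adj] (v : V)
    (hv : ∀ u, Γ.Adj v u → ∀ w w', Γ.Adj v w → Γ.Adj v w' → u ≠ w → u ≠ w' →
      ¬ Γ.Adj u w → ¬ Γ.Adj u w' → w = w')
    (ih : Group.Coherent (Γ.induce {w | w ≠ v}).racg) : Group.Coherent Γ.racg := by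
  classical
  let Δ := Γ.induce {w | w ≠ v}
  let A := Δ.racg
  let S : Finset A := (Finset.univ.filter (fun u : {w | w ≠ v} => Γ.Adj v u)).image (sg Δ)
  have hS : ∀ a ∈ S, ∃ u : {w | w ≠ v}, Γ.Adj v u ∧ sg Δ u = a := by
    intro a ha
    simpa [S] using ha
  have hSmem : ∀ u : {w | w ≠ v}, Γ.Adj v u → sg Δ u ∈ S := by
    intro u hu
    exact Finset.mem_image_of_mem _ (by simpa using hu)
  let C : Subgroup A := closure (S : Set A)
  have hCsl : Group.Slender C := by
    let S' : Finset C := Finset.univ.image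
      (fun a : S => (⟨a.1, Subgroup.subset_closure a.2⟩ : C))
    have hS' : ∀ c ∈ S', c.1 ∈ S := by
      intro c hc
      obtain ⟨a, -, rfl⟩ := Finset.mem_image.1 hc
      exact a.2
    refine slender_of_involutions S'.card S' le_rfl ?_ ?_ ?_
    · have : ((S' : Finset C) : Set C) = ((↑) : C → A) ⁻¹' (S : Set A) := by
        ext c
        constructor
        · intro hc; exact hS' c hc
        · intro hc
          exact Finset.mem_coe.2 (Finset.mem_image.2 ⟨⟨c.1, hc⟩, Finset.mem_univ _, rfl⟩)
      rw [this]
      exact Subgroup.closure_closure_coe_preimage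
    · intro s hs
      obtain ⟨u, -, hu⟩ := hS _ (hS' s hs)
      apply Subtype.ext
      change s.1 * s.1 = 1
      rw [← hu, sg_mul_self]
    · intro s hs t ht t' ht' h1 h2
      obtain ⟨u, hvu, hu⟩ := hS _ (hS' s hs)
      obtain ⟨w, hvw, hw⟩ := hS _ (hS' t ht)
      obtain ⟨w', hvw', hw'⟩ := hS _ (hS' t' ht')
      have aux : ∀ (t : C) (w : {w | w ≠ v}), sg Δ w = t.1 → ¬ Commute s t →
          u.1 ≠ w.1 ∧ ¬ Γ.Adj u.1 w.1 := by
        intro t w hw h1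
        constructor
        · intro h
          apply h1
          have : u = w := Subtype.ext h
          subst this
          rw [Subtype.ext (hu.symm.trans hw)]
        · intro h
          apply h1
          apply Subtype.ext
          change s.1 * t.1 = t.1 * s.1
          rw [← hu, ← hw]
          exact sg_comm Δ h
      obtain ⟨a1, a2⟩ := aux t w hw h1
      obtain ⟨b1, b2⟩ := aux t' w' hw' h2
      have : w = w' := Subtype.ext (hv u hvu w w' hvw hvw' a1 b1 a2 b2)
      apply Subtype.ext
      rw [← hw, ← hw', this]
  have hstab : ∀ i : A ⧸ C, Group.Slender (MulAction.stabilizer A i) := by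
    intro i
    induction i using QuotientGroup.induction_on with
    | H g =>
    have hmem : ∀ x : MulAction.stabilizer A (g : A ⧸ C), g⁻¹ * x.1 * g ∈ C := by
      intro x
      have : x.1 • (g : A ⧸ C) = g := x.2
      rw [MulAction.Quotient.smul_coe, eq_comm, QuotientGroup.eq, smul_eq_mul] at this
      rwa [mul_assoc]
    refine slender_of_injective
      (((MulAut.conj g⁻¹).toMonoidHom.comp (MulAction.stabilizer A (g : A ⧸ C)).subtype).codRestrict
        C (by intro x; simpa using hmem x)) ?_ hCsl
    intro x y hxy
    apply Subtype.ext
    exact (MulAut.conj g⁻¹).injective (congrArg Subtype.val hxy)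
  have hcoh := semidirect_coherent (A := A) (I := A ⧸ C) ih hstab
  let i0 : A ⧸ C := ((1 : A) : A ⧸ C)
  obtain ⟨ρ, hρ⟩ := sg_lift (K := FP2 (A ⧸ C) ⋊[permAut A (A ⧸ C)] A) Γ
    (fun u => if h : u = v then SemidirectProduct.inl (gen i0)
      else SemidirectProduct.inr (sg Δ ⟨u, h⟩))
    (by
      intro u
      split
      · rw [← map_mul, gen_mul_gen, map_one]
      · rw [← map_mul, sg_mul_self, map_one])
    (by
      have key : ∀ (u : {w | w ≠ v}), Γ.Adj v u →
          (SemidirectProduct.inl (gen i0) * SemidirectProduct.inr (sg Δ u) :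
            FP2 (A ⧸ C) ⋊[permAut A (A ⧸ C)] A) =
          SemidirectProduct.inr (sg Δ u) * SemidirectProduct.inl (gen i0) := by
        intro u hu
        have h1 : sg Δ u • i0 = i0 := by
          change ((sg Δ u * 1 : A) : A ⧸ C) = ((1 : A) : A ⧸ C)
          rw [eq_comm, QuotientGroup.eq]
          simpa using Subgroup.subset_closure (hSmem u hu)
        have h2 := SemidirectProduct.inl_aut (φ := permAut A (A ⧸ C)) (sg Δ u) (gen i0)
        rw [permAut_gen, h1] at h2
        rw [h2, mul_assoc, ← map_mul, inv_mul_cancel, map_one, mul_one, ← h2]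
      intro u w huw
      by_cases hu : u = v
      · by_cases hw : w = v
        · rw [hu, hw] at huw; exact absurd huw (Γ.irrefl)
        · subst hu
          simp only [dif_neg hw]
          exact key ⟨w, hw⟩ huw
      · by_cases hw : w = v
        · subst hw
          simp only [dif_neg hu]
          exact (key ⟨u, hu⟩ huw.symm).symm
        · simp only [dif_neg hu, dif_neg hw]
          rw [← map_mul, ← map_mul, sg_comm Δ]
          exact huw)
  refine coherent_of_injective ρ ?_ hcoh
  -- the left inverse
  obtain ⟨j, hj⟩ := sg_lift (K := Γ.racg) Δ (fun u => sg Γ u.1) (fun u => sg_mul_self Γ _)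
    (fun u w h => sg_comm Γ h)
  have hC : ∀ c ∈ C, j c * sg Γ v * (j c)⁻¹ = sg Γ v := by
    have : C ≤ (Subgroup.centralizer {sg Γ v}).comap j := by
      rw [Subgroup.closure_le]
      intro a ha
      obtain ⟨u, hu, rfl⟩ := hS a ha
      rw [SetLike.mem_coe, Subgroup.mem_comap, hj, Subgroup.mem_centralizer_singleton_iff]
      exact (sg_comm Γ hu).symm
    intro c hc
    have h := this hc
    rw [Subgroup.mem_comap, Subgroup.mem_centralizer_singleton_iff] at h
    rw [h, mul_assoc, mul_inv_cancel, mul_one]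
  let cj : A ⧸ C → Γ.racg := Quotient.lift (fun a : A => j a * sg Γ v * (j a)⁻¹) (by
    intro a b hab
    have hab : a⁻¹ * b ∈ C := QuotientGroup.leftRel_apply.1 hab
    have h := hC _ hab
    simp only [map_mul, map_inv] at h
    change j a * sg Γ v * (j a)⁻¹ = j b * sg Γ v * (j b)⁻¹
    conv_lhs => rw [← h]
    group)
  have hcj : ∀ a : A, cj (a : A ⧸ C) = j a * sg Γ v * (j a)⁻¹ := fun _ => rfl
  have hcj1 : ∀ i, cj i * cj i = 1 := by
    intro i
    induction i using QuotientGroup.induction_on with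
    | H a =>
    rw [hcj]
    calc j a * sg Γ v * (j a)⁻¹ * (j a * sg Γ v * (j a)⁻¹)
        = j a * (sg Γ v * sg Γ v) * (j a)⁻¹ := by group
      _ = 1 := by rw [sg_mul_self]; group
  let τ : FP2 (A ⧸ C) ⋊[permAut A (A ⧸ C)] A →* Γ.racg :=
    SemidirectProduct.lift (lft cj hcj1) j (by
      intro a
      apply fp2_hom_ext
      intro i
      induction i using QuotientGroup.induction_on with
      | H b =>
      change lft cj hcj1 (permAut A (A ⧸ C) a (gen (b : A ⧸ C))) =
        j a * lft cj hcj1 (gen (b : A ⧸ C)) * (j a)⁻¹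
      rw [permAut_gen, lft_gen, lft_gen, MulAction.Quotient.smul_coe, hcj, hcj, smul_eq_mul,
        map_mul]
      group)
  have hτ : τ.comp ρ = MonoidHom.id _ := by
    apply sg_ext
    intro u
    rw [MonoidHom.comp_apply, hρ, MonoidHom.id_apply]
    by_cases hu : u = v
    · subst hu
      rw [dif_pos rfl, SemidirectProduct.lift_inl, lft_gen, hcj, map_one]
      simp
    · rw [dif_neg hu, SemidirectProduct.lift_inr, hj]
  intro x y hxy
  have := congrArg τ hxy
  rwa [← MonoidHom.comp_apply, ← MonoidHom.comp_apply, hτ] at this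

theorem exists_vertex {V : Type} [Fintype V] [DecidableEq V] [Nonempty V] (Γ : SimpleGraph V)
    (hcard : Fintype.card V ≤ 5) :
    ∃ v, ∀ u, Γ.Adj v u → ∀ w w', Γ.Adj v w → Γ.Adj v w' → u ≠ w → u ≠ w' →
      ¬ Γ.Adj u w → ¬ Γ.Adj u w' → w = w' := by
  by_contra hcon
  push Not at hcon
  obtain ⟨u, -, w, w', -, -, h1, h2, h3, h4, h5⟩ := hcon (Classical.arbitrary V)
  obtain ⟨a, ha, b, b', hb, hb', k1, k2, -, -, k5⟩ := hcon u
  have : ({u, w, w', a, b, b'} : Finset V).card = 6 := by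
    have hne : ∀ x, Γ.Adj u x → u ≠ x ∧ w ≠ x ∧ w' ≠ x := by
      intro x hx
      refine ⟨hx.ne, ?_, ?_⟩
      · rintro rfl; exact h3 hx
      · rintro rfl; exact h4 hx
    have := hne a ha
    have := hne b hb
    have := hne b' hb'
    rw [Finset.card_insert_of_notMem, Finset.card_insert_of_notMem,
      Finset.card_insert_of_notMem, Finset.card_insert_of_notMem,
      Finset.card_insert_of_notMem, Finset.card_singleton] <;> simp <;> tauto
  have := Finset.card_le_univ ({u, w, w', a, b, b'} : Finset V)
  omega

theorem main (n : ℕ) : ∀ {V : Type} [Fintype V] [DecidableEq V] (Γ : SimpleGraph V)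
    [DecidableRel Γ.Adj], Fintype.card V = n → n ≤ 5 → Group.Coherent Γ.racg := by
  induction n with
  | zero =>
    intro V _ _ Γ _ h _
    haveI : IsEmpty V := Fintype.card_eq_zero_iff.1 h
    have htop : (⊤ : Subgroup Γ.racg) = ⊥ := by
      rw [← sg_closure, Set.range_eq_empty, Subgroup.closure_empty]
    intro H _
    haveI : Subsingleton Γ.racg := by
      refine ⟨fun x y => ?_⟩
      have hx : x ∈ (⊤ : Subgroup Γ.racg) := trivial
      have hy : y ∈ (⊤ : Subgroup Γ.racg) := trivial
      rw [htop, Subgroup.mem_bot] at hx hy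
      rw [hx, hy]
    rw [fp_iff]
    infer_instance
  | succ n ih =>
    intro V _ _ Γ _ h hn
    haveI : Nonempty V := Fintype.card_pos_iff.1 (by omega)
    obtain ⟨v, hv⟩ := exists_vertex Γ (by omega)
    refine coherent_step Γ v hv ?_
    apply ih
    · have : Fintype.card {w | w ≠ v} = Fintype.card V - 1 := Set.card_ne_eq v
      omega
    · omega

end RACG

/-- The right-angled Coxeter group of a finite simplicial graph with at most
`5` vertices is coherent. -/
theorem racg_coherent_of_card_le_five
    {V : Type} [Fintype V] [DecidableEq V] (Γ : SimpleGraph V) [DecidableRel Γ.Adj]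
    (hcard : Fintype.card V ≤ 5) :
    Group.Coherent Γ.racg := by
  exact RACG.main _ Γ rfl hcard
end

section
/- Let Γ = (V,E) be a finite simplicial graph with #V = 6 and #E ≤ 8. Then the right-angled Coxeter group C(Γ) is coherent. -/
theorem SimpleGraph.injective_of_locally_injective {A B : Type*} {G' : SimpleGraph A}
    {G : SimpleGraph B} (f : G' →g G) (hG : G.IsAcyclic) (hc : G'.Preconnected)
    (hf : ∀ a b c, G'.Adj a b → G'.Adj a c → f b = f c → b = c) : Function.Injective f := by
  classical
  have key : ∀ {a b : A} (p : G'.Walk a b), p.IsPath → List.IsChain (· ≠ ·) (p.map f).edges := by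
    intro a b p
    induction p with
    | nil => intro _; simp
    | @cons u v w h q ih =>
      intro hp
      rw [SimpleGraph.Walk.cons_isPath_iff] at hp
      have h1 := ih hp.1
      cases q with
      | nil => simp
      | @cons _ v' _ h' q' =>
        simp only [SimpleGraph.Walk.map_cons, SimpleGraph.Walk.edges_cons] at h1 ⊢
        refine List.isChain_cons_cons.2 ⟨?_, h1⟩
        intro he
        rw [Sym2.eq_iff] at he
        rcases he with ⟨h2, _⟩ | ⟨h2, _⟩
        · exact (f.map_adj h).ne h2
        · have := hf v u v' h.symm h' h2
          apply hp.2
          simp [this]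
  intro a b hab
  obtain ⟨p, hp⟩ := (hc a b).exists_isPath
  have h1 := (hG.isPath_iff_isChain (p.map f)).2 (key p hp)
  cases p with
  | nil => rfl
  | @cons _ v _ h q =>
    exfalso
    rw [SimpleGraph.Walk.map_cons, SimpleGraph.Walk.cons_isPath_iff] at h1
    apply h1.2
    rw [hab]
    exact SimpleGraph.Walk.end_mem_support _

theorem groupoid_core {Q X : Type*} [Group Q] [MulAction Q X] (T : SimpleGraph X)
    (hT : T.IsAcyclic) (hadj : ∀ (g : Q) (x y : X), T.Adj x y → T.Adj (g • x) (g • y))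
    (K : Set X) (hK : (T.induce K).Preconnected) (L : K → K → Set Q)
    (h1 : ∀ u, 1 ∈ L u u) (hmul : ∀ u v w p q, q ∈ L v w → p ∈ L u v → q * p ∈ L u w)
    (hinv : ∀ u v q, q ∈ L u v → q⁻¹ ∈ L v u)
    (hact : ∀ u v q, q ∈ L u v → q • (u : X) = v)
    (hedge : ∀ (u v u' v' : K) q, q ∈ L u v → T.Adj u u' → q • (u' : X) = v' → q ∈ L u' v')
    (hgen : Subgroup.closure {q | ∃ u v, q ∈ L u v} = ⊤)
    (u v : K) (q : Q) (hq : q • (u : X) = v) : q ∈ L u v := by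
  classical
  let S : Setoid (Q × K) :=
    { r := fun a b => a.1⁻¹ * b.1 ∈ L b.2 a.2
      iseqv :=
        { refl := fun a => by simpa using h1 a.2
          symm := fun {a b} h => by simpa using hinv _ _ _ h
          trans := fun {a b c} h h' => by simpa [mul_assoc] using hmul _ _ _ _ _ h h' } }
  have Sr : ∀ a b : Q × K, (Quotient.mk S a = Quotient.mk S b) ↔ a.1⁻¹ * b.1 ∈ L b.2 a.2 :=
    fun a b => Quotient.eq
  let f : Quotient S → X := Quotient.lift (fun a : Q × K => a.1 • (a.2 : X)) (by
    intro a b h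
    have := hact _ _ _ (show a.1⁻¹ * b.1 ∈ L b.2 a.2 from h)
    change a.1 • (a.2 : X) = b.1 • (b.2 : X)
    rw [← this, mul_smul, smul_inv_smul])
  have hfm : ∀ q u, f (Quotient.mk S (q, u)) = q • (u : X) := fun _ _ => rfl
  let T' : SimpleGraph (Quotient S) :=
    { Adj := fun a b => ∃ (q : Q) (u u' : K), T.Adj u u' ∧ a = Quotient.mk S (q, u) ∧
        b = Quotient.mk S (q, u')
      symm := ⟨by
        rintro a b ⟨q, u, u', h, ha, hb⟩
        exact ⟨q, u', u, h.symm, hb, ha⟩⟩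
      loopless := ⟨by
        rintro a ⟨q, u, u', h, ha, hb⟩
        have h2 : f a = q • (u : X) := by rw [ha, hfm]
        have h3 : f a = q • (u' : X) := by rw [hb, hfm]
        exact (hadj q _ _ h).ne (h2.symm.trans h3)⟩ }
  let F : T' →g T := ⟨f, by
    rintro a b ⟨q, u, u', h, rfl, rfl⟩
    exact hadj q _ _ h⟩
  have hloc : ∀ a b c, T'.Adj a b → T'.Adj a c → F b = F c → b = c := by
    rintro a b c ⟨q, u, u', h, ha, rfl⟩ ⟨p, w, w', h', ha', rfl⟩ he
    have he' : q • (u' : X) = p • (w' : X) := he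
    rw [ha] at ha'
    rw [Sr] at ha' ⊢
    refine hedge _ _ _ _ _ ha' h' ?_
    simp only
    rw [mul_smul, ← he', inv_smul_smul]
  have hreach1 : ∀ q u u', T'.Reachable (Quotient.mk S (q, u)) (Quotient.mk S (q, u')) := by
    intro q u u'
    obtain ⟨p⟩ := hK u u'
    induction p with
    | nil => exact SimpleGraph.Reachable.refl _
    | cons h p ih =>
      refine SimpleGraph.Reachable.trans (SimpleGraph.Adj.reachable ?_) ih
      exact ⟨q, _, _, h, rfl, rfl⟩
  have hstep : ∀ q l a b, l ∈ L a b → ∀ u,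
      T'.Reachable (Quotient.mk S (q, u)) (Quotient.mk S (q * l, u)) := by
    intro q l a b hl u
    have e : Quotient.mk S (q, b) = Quotient.mk S (q * l, a) := by
      rw [Sr]; simpa using hl
    refine (hreach1 q u b).trans ?_
    rw [e]
    exact hreach1 _ _ _
  have hreach2 : ∀ l : Q, ∀ q u, T'.Reachable (Quotient.mk S (q, u)) (Quotient.mk S (q * l, u)) := by
    intro l
    have hl : l ∈ Subgroup.closure {q | ∃ u v, q ∈ L u v} := by rw [hgen]; trivial
    induction hl using Subgroup.closure_induction with
    | mem x hx => obtain ⟨a, b, hx⟩ := hx; exact fun q u => hstep q x a b hx u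
    | one => intro q u; rw [mul_one]
    | mul x y _ _ hx hy => intro q u; rw [← mul_assoc]; exact (hx q u).trans (hy _ u)
    | inv x _ hx => intro q u; simpa using (hx (q * x⁻¹) u).symm
  have hpre : T'.Preconnected := by
    intro a b
    obtain ⟨⟨q, u⟩, rfl⟩ := Quotient.exists_rep a
    obtain ⟨⟨p, w⟩, rfl⟩ := Quotient.exists_rep b
    have := hreach2 (q⁻¹ * p) q u
    rw [mul_inv_cancel_left] at this
    exact this.trans (hreach1 _ _ _)
  have hinj := SimpleGraph.injective_of_locally_injective F hT hpre hloc
  have : Quotient.mk S (1, v) = Quotient.mk S (q, u) := by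
    apply hinj
    change (1 : Q) • (v : X) = q • (u : X)
    rw [hq, one_smul]
  rw [Sr] at this
  simpa using this

theorem fp_of_finite {ι : Type*} [Finite ι] (R : Set (FreeGroup ι)) (hR : R.Finite) {G : Type*}
    [Group G] (e : PresentedGroup R ≃* G) : Group.FinitelyPresented G := by
  obtain ⟨n, ⟨f⟩⟩ := Finite.exists_equiv_fin ι
  exact ⟨n, _, hR.image _, ⟨(PresentedGroup.equivPresentedGroup R f).symm.trans e⟩⟩

theorem tree_fp {G X : Type*} [Group G] [MulAction G X] (T : SimpleGraph X) (hT : T.IsTree)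
    (hadj : ∀ (g : G) (x y : X), T.Adj x y → T.Adj (g • x) (g • y))
    (hv : ∀ x : X, ∀ L : Subgroup G, L ≤ MulAction.stabilizer G x → L.FG →
      Group.FinitelyPresented L)
    (he : ∀ x y : X, T.Adj x y → (MulAction.stabilizer G x ⊓ MulAction.stabilizer G y).FG)
    (hG : Group.FG G) : Group.FinitelyPresented G := by
  classical
  obtain ⟨S, hS⟩ := hG.out
  obtain ⟨x0⟩ := hT.1.nonempty
  obtain ⟨K', hK', hKc⟩ := T.extend_finset_to_connected hT.1.preconnected
    (t := insert x0 (S.image (fun s => s • x0))) (Finset.insert_nonempty _ _)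
  let K : Set X := (K' : Set X)
  have hx0 : x0 ∈ K := hK' (Finset.mem_insert_self _ _)
  have hSx0 : ∀ s ∈ S, s • x0 ∈ K := fun s hs =>
    hK' (Finset.mem_insert_of_mem (Finset.mem_image_of_mem _ hs))
  have hKfin : Finite K := inferInstanceAs (Finite (K' : Set X))
  change (T.induce K).Connected at hKc
  clear_value K
  let so : Setoid K :=
    { r := fun u v => ∃ g : G, g • (u : X) = v
      iseqv :=
        { refl := fun u => ⟨1, one_smul _ _⟩
          symm := fun {u v} ⟨g, h⟩ => ⟨g⁻¹, by rw [← h, inv_smul_smul]⟩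
          trans := fun {u v w} ⟨g, h⟩ ⟨g', h'⟩ => ⟨g' * g, by rw [mul_smul, h, h']⟩ } }
  let Ω := Quotient so
  let o : K → Ω := Quotient.mk so
  have ho : ∀ (g : G) (u v : K), g • (u : X) = v → o u = o v := fun g u v h => Quotient.sound ⟨g, h⟩
  let rep : Ω → K := Quotient.out
  have hrep : ∀ w, o (rep w) = w := fun w => Quotient.out_eq w
  have hτ' : ∀ u : K, ∃ g : G, g • (rep (o u) : X) = u ∧ (rep (o u) = u → g = 1) := by
    intro u
    by_cases h : rep (o u) = u
    · exact ⟨1, by rw [h, one_smul], fun _ => rfl⟩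
    · obtain ⟨g, hg⟩ : ∃ g : G, g • (rep (o u) : X) = u := Quotient.exact (hrep (o u))
      exact ⟨g, hg, fun h' => absurd h' h⟩
  choose τ hτ hτ1 using hτ'
  have hτrep : ∀ w, τ (rep w) = 1 := fun w => hτ1 _ (by rw [hrep])
  have hτi : ∀ u, (τ u)⁻¹ • (u : X) = rep (o u) := fun u => by
    rw [inv_smul_eq_iff, hτ]
  have hA : ∀ u u' : K, ∃ A : Finset G, T.Adj u u' → Subgroup.closure (A : Set G) =
      MulAction.stabilizer G (u : X) ⊓ MulAction.stabilizer G (u' : X) := by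
    intro u u'
    by_cases h : T.Adj u u'
    · obtain ⟨A, hA⟩ := he _ _ h
      exact ⟨A, fun _ => hA⟩
    · exact ⟨∅, fun h' => absurd h' h⟩
  choose A hA using hA
  have hσ : ∀ u u' v v' : K, ∃ s : G, (∃ g : G, g • (u : X) = v ∧ g • (u' : X) = v') →
      s • (u : X) = v ∧ s • (u' : X) = v' := by
    intro u u' v v'
    by_cases h : (∃ g : G, g • (u : X) = v ∧ g • (u' : X) = v')
    · exact ⟨h.choose, fun _ => h.choose_spec⟩
    · exact ⟨1, fun h' => absurd h' h⟩
  choose σ hσ using hσ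
  let F : Set G := (S : Set G) ∪ (⋃ u, ⋃ u', (A u u' : Set G)) ∪
    Set.range (fun p : K × K × K × K => σ p.1 p.2.1 p.2.2.1 p.2.2.2)
  have hF : F.Finite := by
    refine Set.Finite.union (Set.Finite.union S.finite_toSet ?_) (Set.finite_range _)
    exact Set.finite_iUnion fun u => Set.finite_iUnion fun u' => (A u u').finite_toSet
  have hFS : ∀ s ∈ S, s ∈ F := fun s hs => Or.inl (Or.inl hs)
  have hFA : ∀ u u', ∀ s ∈ A u u', s ∈ F := fun u u' s hs =>
    Or.inl (Or.inr (Set.mem_iUnion.2 ⟨u, Set.mem_iUnion.2 ⟨u', hs⟩⟩))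
  have hFσ : ∀ u u' v v', σ u u' v v' ∈ F := fun u u' v v' => Or.inr ⟨(u, u', v, v'), rfl⟩
  clear_value F
  let gen : Ω → Set G := fun w => {x | ∃ f ∈ F, ∃ u v : K, o u = w ∧ f • (u : X) = v ∧
    x = (τ v)⁻¹ * f * τ u}
  have hgenfin : ∀ w, (gen w).Finite := by
    intro w
    refine ((hF.prod (Set.finite_univ (α := K × K))).image
      (fun p : G × K × K => (τ p.2.2)⁻¹ * p.1 * τ p.2.1)).subset ?_
    rintro x ⟨f, hf, u, v, -, -, rfl⟩
    exact ⟨(f, u, v), ⟨hf, trivial⟩, rfl⟩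
  let L : Ω → Subgroup G := fun w => Subgroup.closure (gen w)
  have hLstab : ∀ w, L w ≤ MulAction.stabilizer G (rep w : X) := by
    intro w
    refine (Subgroup.closure_le _).2 ?_
    rintro x ⟨f, hf, u, v, rfl, h, rfl⟩
    change ((τ v)⁻¹ * f * τ u) • (rep (o u) : X) = rep (o u)
    rw [mul_smul, mul_smul, hτ, h, hτi, ho f u v h]
  have hLfp : ∀ w, Group.FinitelyPresented (L w) := by
    intro w
    refine hv _ _ (hLstab w) ?_
    exact ⟨(hgenfin w).toFinset, by simp [L]⟩
  choose n rels hrels hequiv using hLfp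
  have e : ∀ w, PresentedGroup (rels w) ≃* L w := fun w => (hequiv w).some
  let ι := K ⊕ (Σ w : Ω, Fin (n w))
  let Φ0 : ι → G := Sum.elim τ (fun p => (e p.1 (PresentedGroup.of p.2) : G))
  let emb : ∀ w, FreeGroup (Fin (n w)) →* FreeGroup ι := fun w =>
    FreeGroup.map (fun i => Sum.inr ⟨w, i⟩)
  have hΦemb : ∀ w x, FreeGroup.lift Φ0 (emb w x) = (e w (PresentedGroup.mk _ x) : G) := by
    intro w x
    have : (FreeGroup.lift Φ0).comp (emb w) =
        ((L w).subtype.comp (e w).toMonoidHom).comp (PresentedGroup.mk (rels w)) := by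
      ext i
      simp [emb, Φ0, PresentedGroup.of]
    exact DFunLike.congr_fun this x
  have hlam : ∀ w (l : G), ∃ x : FreeGroup (Fin (n w)), ∀ h : l ∈ L w,
      e w (PresentedGroup.mk _ x) = ⟨l, h⟩ := by
    intro w l
    by_cases h : l ∈ L w
    · obtain ⟨x, hx⟩ := PresentedGroup.mk_surjective (rels w) ((e w).symm ⟨l, h⟩)
      exact ⟨x, fun _ => by rw [hx]; simp⟩
    · exact ⟨1, fun h' => absurd h' h⟩
  choose lam hlam using hlam
  let wd : G → K → K → FreeGroup ι := fun g u v =>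
    FreeGroup.of (Sum.inl v) * emb (o u) (lam (o u) ((τ v)⁻¹ * g * τ u)) *
      (FreeGroup.of (Sum.inl u))⁻¹
  let good : G → K → K → Prop := fun g u v =>
    g • (u : X) = v ∧ (τ v)⁻¹ * g * τ u ∈ L (o u)
  have hgoodF : ∀ f ∈ F, ∀ u v : K, f • (u : X) = v → good f u v := fun f hf u v h =>
    ⟨h, Subgroup.subset_closure ⟨f, hf, u, v, rfl, h, rfl⟩⟩
  have hΦwd : ∀ g u v, good g u v → FreeGroup.lift Φ0 (wd g u v) = g := by
    intro g u v h
    simp only [wd, map_mul, map_inv, hΦemb, hlam _ _ h.2, FreeGroup.lift_apply_of]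
    simp only [Φ0, Sum.elim_inl]
    group
  let R : Set (FreeGroup ι) := (⋃ w, emb w '' rels w) ∪
    Set.range (fun w => FreeGroup.of (Sum.inl (rep w))) ∪
    {x | ∃ f ∈ F, ∃ u v u' v' : K, (f • (u : X) = v ∧ f • (u' : X) = v') ∧
      x = wd f u v * (wd f u' v')⁻¹}
  have hRfin : R.Finite := by
    refine Set.Finite.union (Set.Finite.union ?_ (Set.finite_range _)) ?_
    · exact Set.finite_iUnion fun w => (hrels w).image _
    · refine ((hF.prod (Set.finite_univ (α := K × K × K × K))).image
        (fun p : G × K × K × K × K => wd p.1 p.2.1 p.2.2.1 *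
          (wd p.1 p.2.2.2.1 p.2.2.2.2)⁻¹)).subset ?_
      rintro x ⟨f, hf, u, v, u', v', -, rfl⟩
      exact ⟨(f, u, v, u', v'), ⟨hf, trivial⟩, rfl⟩
  have hRΦ : ∀ x ∈ R, FreeGroup.lift Φ0 x = 1 := by
    rintro x ((hx | ⟨w, rfl⟩) | ⟨f, hf, u, v, u', v', ⟨h, h'⟩, rfl⟩)
    · obtain ⟨w, y, hy, rfl⟩ := Set.mem_iUnion.1 hx
      rw [hΦemb, PresentedGroup.one_of_mem hy, map_one, Subgroup.coe_one]
    · simp [Φ0, hτrep]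
    · rw [map_mul, map_inv, hΦwd _ _ _ (hgoodF f hf u v h), hΦwd _ _ _ (hgoodF f hf u' v' h'),
        mul_inv_cancel]
  have hR1 : ∀ w, ∀ x ∈ rels w, PresentedGroup.mk R (emb w x) = 1 := fun w x hx =>
    PresentedGroup.one_of_mem (Or.inl (Or.inl (Set.mem_iUnion.2 ⟨w, x, hx, rfl⟩)))
  have hR2 : ∀ w, PresentedGroup.mk R (FreeGroup.of (Sum.inl (rep w))) = 1 := fun w =>
    PresentedGroup.one_of_mem (Or.inl (Or.inr ⟨w, rfl⟩))
  have hR3 : ∀ f ∈ F, ∀ u v u' v' : K, f • (u : X) = v → f • (u' : X) = v' →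
      PresentedGroup.mk R (wd f u v) = PresentedGroup.mk R (wd f u' v') :=
    fun f hf u v u' v' h h' => PresentedGroup.mk_eq_mk_of_mul_inv_mem
      (Or.inr ⟨f, hf, u, v, u', v', ⟨h, h'⟩, rfl⟩)
  clear_value R
  let π : PresentedGroup R →* G := PresentedGroup.toGroup hRΦ
  have hπmk : ∀ x, π (PresentedGroup.mk R x) = FreeGroup.lift Φ0 x := fun x => rfl
  let t : K → PresentedGroup R := fun u => PresentedGroup.mk R (FreeGroup.of (Sum.inl u))
  let J : Ω → G → PresentedGroup R := fun w g => PresentedGroup.mk R (emb w (lam w g))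
  have hj : ∀ w, ∃ j : L w →* PresentedGroup R, ∀ x,
      j (e w (PresentedGroup.mk _ x)) = PresentedGroup.mk R (emb w x) := by
    intro w
    have hcomp : ∀ x, FreeGroup.lift (fun i => PresentedGroup.mk R (emb w (FreeGroup.of i))) x =
        PresentedGroup.mk R (emb w x) := by
      intro x
      have : FreeGroup.lift (fun i => PresentedGroup.mk R (emb w (FreeGroup.of i))) =
        (PresentedGroup.mk R).comp (emb w) := by ext i; simp
      rw [this]; rfl
    refine ⟨(PresentedGroup.toGroup (f := fun i => PresentedGroup.mk R (emb w (FreeGroup.of i)))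
      (fun x hx => by rw [hcomp, hR1 w x hx])).comp (e w).symm.toMonoidHom, fun x => ?_⟩
    rw [← hcomp]
    simp
    rfl
  choose j hj using hj
  have hJj : ∀ w l (h : l ∈ L w), J w l = j w ⟨l, h⟩ := by
    intro w l h
    rw [← hlam w l h, hj]
  have hJmul : ∀ w g h, g ∈ L w → h ∈ L w → J w (g * h) = J w g * J w h := by
    intro w g h hg hh
    rw [hJj w _ hg, hJj w _ hh, hJj w _ (mul_mem hg hh), ← map_mul]; rfl
  have hJ1 : ∀ w, J w 1 = 1 := by
    intro w
    rw [hJj w _ (one_mem _)]; exact map_one _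
  let br : G → K → K → PresentedGroup R := fun g u v => PresentedGroup.mk R (wd g u v)
  have hbr : ∀ g u v, br g u v = t v * J (o u) ((τ v)⁻¹ * g * τ u) * (t u)⁻¹ := by
    intro g u v
    simp only [br, wd, t, J, map_mul, map_inv]
  have hbrF : ∀ f ∈ F, ∀ u v u' v' : K, f • (u : X) = v → f • (u' : X) = v' →
      br f u v = br f u' v' := hR3
  have hπbr : ∀ g u v, good g u v → π (br g u v) = g := fun g u v h => by
    rw [hπmk, hΦwd _ _ _ h]
  have hJgen : ∀ p : (Σ w : Ω, Fin (n w)), ∃ l ∈ L p.1,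
      PresentedGroup.mk R (FreeGroup.of (Sum.inr p)) = J p.1 l := by
    rintro ⟨w, i⟩
    refine ⟨_, (e w (PresentedGroup.of i)).2, ?_⟩
    rw [hJj w _ (e w (PresentedGroup.of i)).2]
    have := hj w (FreeGroup.of i)
    simp only [emb, FreeGroup.map.of] at this
    rw [← this]; rfl
  have hgoodL : ∀ g u v, good g u v → (τ v)⁻¹ * g * τ u ∈ L (o v) := fun g u v h => by
    rw [← ho g u v h.1]; exact h.2
  have hgood1 : ∀ u, good 1 u u := fun u => ⟨one_smul _ _, by simp⟩
  have hbr1 : ∀ u, br 1 u u = 1 := fun u => by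
    rw [hbr]; simp [hJ1]
  have hgoodmul : ∀ u v w g h, good g v w → good h u v → good (g * h) u w := by
    intro u v w g h hg hh
    refine ⟨by rw [mul_smul, hh.1, hg.1], ?_⟩
    have h1 := mul_mem hg.2 (hgoodL _ _ _ hh)
    rw [ho h u v hh.1]
    convert h1 using 1
    group
  have hbrmul : ∀ u v w g h, good g v w → good h u v → br (g * h) u w = br g v w * br h u v := by
    intro u v w g h hg hh
    have h1 := hJmul _ _ _ hg.2 (hgoodL _ _ _ hh)
    have h2 : (τ w)⁻¹ * g * τ v * ((τ v)⁻¹ * h * τ u) = (τ w)⁻¹ * (g * h) * τ u := by group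
    rw [h2] at h1
    rw [hbr, hbr, hbr, ho h u v hh.1, h1]
    group
  have hgoodinv : ∀ u v g, good g u v → good g⁻¹ v u := by
    intro u v g h
    refine ⟨by rw [← h.1, inv_smul_smul], ?_⟩
    have h1 := inv_mem (hgoodL _ _ _ h)
    convert h1 using 1
    group
  have hbrinv : ∀ u v g, good g u v → br g⁻¹ v u = (br g u v)⁻¹ := by
    intro u v g h
    rw [eq_inv_iff_mul_eq_one, ← hbrmul u v u _ _ (hgoodinv u v g h) h, inv_mul_cancel, hbr1]
  have hstab : ∀ u u' : K, T.Adj u u' → ∀ g : G, g • (u : X) = u → g • (u' : X) = u' →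
      good g u u ∧ good g u' u' ∧ br g u u = br g u' u' := by
    intro u u' h g hg hg'
    have hmem : g ∈ Subgroup.closure (A u u' : Set G) := by
      rw [hA u u' h]; exact ⟨hg, hg'⟩
    clear hg hg'
    induction hmem using Subgroup.closure_induction with
    | mem x hx =>
      have hx' : x ∈ MulAction.stabilizer G (u : X) ⊓ MulAction.stabilizer G (u' : X) := by
        rw [← hA u u' h]; exact Subgroup.subset_closure hx
      have hxF := hFA u u' x hx
      exact ⟨hgoodF x hxF u u hx'.1, hgoodF x hxF u' u' hx'.2,
        hbrF x hxF u u u' u' hx'.1 hx'.2⟩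
    | one => exact ⟨hgood1 _, hgood1 _, by rw [hbr1, hbr1]⟩
    | mul x y _ _ hx hy =>
      refine ⟨hgoodmul _ _ _ _ _ hx.1 hy.1, hgoodmul _ _ _ _ _ hx.2.1 hy.2.1, ?_⟩
      rw [hbrmul _ _ _ _ _ hx.1 hy.1, hbrmul _ _ _ _ _ hx.2.1 hy.2.1, hx.2.2, hy.2.2]
    | inv x _ hx =>
      refine ⟨hgoodinv _ _ _ hx.1, hgoodinv _ _ _ hx.2.1, ?_⟩
      rw [hbrinv _ _ _ hx.1, hbrinv _ _ _ hx.2.1, hx.2.2]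
  have hedge : ∀ u u' v v' : K, T.Adj u u' → ∀ g : G, g • (u : X) = v → g • (u' : X) = v' →
      good g u' v' ∧ br g u v = br g u' v' := by
    intro u u' v v' h g hg hg'
    obtain ⟨h1, h2⟩ := hσ u u' v v' ⟨g, hg, hg'⟩
    set s := σ u u' v v' with hs
    have hsF : s ∈ F := hFσ u u' v v'
    have h3 := hstab u u' h (s⁻¹ * g) (by rw [mul_smul, hg, ← h1, inv_smul_smul])
      (by rw [mul_smul, hg', ← h2, inv_smul_smul])
    have h4 : g = s * (s⁻¹ * g) := by group
    have g1 := hgoodF s hsF u v h1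
    have g2 := hgoodF s hsF u' v' h2
    rw [h4]
    refine ⟨hgoodmul _ _ _ _ _ g2 h3.2.1, ?_⟩
    rw [hbrmul _ _ _ _ _ g1 h3.1, hbrmul _ _ _ _ _ g2 h3.2.1, h3.2.2,
      hbrF s hsF u v u' v' h1 h2]
  let actQ : MulAction (PresentedGroup R) X := MulAction.compHom X π
  have hsm : ∀ (q : PresentedGroup R) (x : X), q • x = π q • x := fun _ _ => rfl
  have core := groupoid_core (Q := PresentedGroup R) T hT.2 (fun q x y h => hadj (π q) x y h) K
    hKc.preconnected (fun u v => {q | ∃ g, good g u v ∧ q = br g u v})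
    (fun u => ⟨1, hgood1 u, (hbr1 u).symm⟩)
    (by
      rintro u v w _ _ ⟨g, hg, rfl⟩ ⟨h, hh, rfl⟩
      exact ⟨g * h, hgoodmul _ _ _ _ _ hg hh, (hbrmul _ _ _ _ _ hg hh).symm⟩)
    (by
      rintro u v _ ⟨g, hg, rfl⟩
      exact ⟨g⁻¹, hgoodinv _ _ _ hg, (hbrinv _ _ _ hg).symm⟩)
    (by
      rintro u v _ ⟨g, hg, rfl⟩
      rw [hsm, hπbr _ _ _ hg, hg.1])
    (by
      rintro u v u' v' _ ⟨g, hg, rfl⟩ h h'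
      rw [hsm, hπbr _ _ _ hg] at h'
      obtain ⟨h1, h2⟩ := hedge u u' v v' h g hg.1 h'
      exact ⟨g, h1, h2⟩)
    (by
      rw [eq_top_iff, ← PresentedGroup.closure_range_of R, Subgroup.closure_le]
      rintro _ ⟨i, rfl⟩
      apply Subgroup.subset_closure
      rcases i with u | p
      · refine ⟨rep (o u), u, τ u, ⟨hτ u, ?_⟩, ?_⟩
        · rw [hτrep]; simp
        · rw [hbr, hτrep]
          simp only [inv_mul_cancel, mul_one, hJ1, t, hR2, inv_one]
          rfl
      · obtain ⟨l, hl, hl'⟩ := hJgen p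
        refine ⟨rep p.1, rep p.1, l, ⟨hLstab _ hl, ?_⟩, ?_⟩
        · rw [hτrep, hrep]; simpa using hl
        · rw [hbr, hτrep, hrep]
          simp only [inv_one, mul_one, one_mul, t, hR2]
          exact hl')
  have hinj : Function.Injective π := by
    rw [injective_iff_map_eq_one]
    intro q hq
    obtain ⟨g, hg, rfl⟩ := core ⟨x0, hx0⟩ ⟨x0, hx0⟩ q (by rw [hsm, hq, one_smul])
    rw [hπbr _ _ _ hg] at hq
    rw [hq, hbr1]
  have hsurj : Function.Surjective π := by
    rw [← MonoidHom.range_eq_top, eq_top_iff, ← hS, Subgroup.closure_le]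
    intro s hs
    exact ⟨br s ⟨x0, hx0⟩ ⟨s • x0, hSx0 s hs⟩, hπbr _ _ _ (hgoodF s (hFS s hs) _ _ rfl)⟩
  exact fp_of_finite R hRfin (MulEquiv.ofBijective π ⟨hinj, hsurj⟩)

theorem Group.FinitelyPresented.congr {G H : Type*} [Group G] [Group H] (e : G ≃* H)
    (h : Group.FinitelyPresented G) : Group.FinitelyPresented H := by
  obtain ⟨n, rels, hf, ⟨f⟩⟩ := h
  exact ⟨n, rels, hf, ⟨f.trans e⟩⟩

theorem tree_coherent {G X : Type*} [Group G] [MulAction G X] (T : SimpleGraph X) (hT : T.IsTree)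
    (hadj : ∀ (g : G) (x y : X), T.Adj x y → T.Adj (g • x) (g • y))
    (hv : ∀ x : X, ∀ L : Subgroup G, L ≤ MulAction.stabilizer G x → L.FG →
      Group.FinitelyPresented L)
    (he : ∀ x y : X, T.Adj x y → ∀ L : Subgroup G, L ≤ MulAction.stabilizer G x →
      L ≤ MulAction.stabilizer G y → L.FG) : Group.Coherent G := by
  intro H hH
  refine tree_fp (G := H) (X := X) T hT (fun g x y h => hadj g x y h) ?_ ?_
    ((Group.fg_iff_subgroup_fg H).2 hH)
  · intro x L hL hfg
    have e : L ≃* L.map H.subtype := L.equivMapOfInjective _ H.subtype_injective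
    refine Group.FinitelyPresented.congr e.symm (hv x _ ?_ ?_)
    · rintro _ ⟨l, hl, rfl⟩
      exact hL hl
    · rw [← Group.fg_iff_subgroup_fg] at hfg ⊢
      exact Group.fg_of_surjective (f := e.toMonoidHom) e.surjective
  · intro x y h
    set P := MulAction.stabilizer H x ⊓ MulAction.stabilizer H y
    have := he x y h (P.map H.subtype) (by rintro _ ⟨l, hl, rfl⟩; exact hl.1)
      (by rintro _ ⟨l, hl, rfl⟩; exact hl.2)
    have e : P ≃* P.map H.subtype := P.equivMapOfInjective _ H.subtype_injective
    rw [← Group.fg_iff_subgroup_fg] at this ⊢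
    exact Group.fg_of_surjective (f := e.symm.toMonoidHom) e.symm.surjective

section Amalgam
variable {S : Type*}

noncomputable def flipWord (s : S) (l : List S) : List S :=
  open Classical in if l.head? = some s then l.tail else s :: l

theorem flipWord_chain (s : S) (l : List S) (h : l.IsChain (· ≠ ·)) :
    (flipWord s l).IsChain (· ≠ ·) := by
  unfold flipWord
  split_ifs with h1
  · exact h.tail
  · rw [List.isChain_cons]
    refine ⟨?_, h⟩
    rintro y hy rfl
    exact h1 hy

theorem flipWord_flipWord (s : S) (l : List S) (h : l.IsChain (· ≠ ·)) :
    flipWord s (flipWord s l) = l := by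
  unfold flipWord
  by_cases h1 : l.head? = some s
  · rw [if_pos h1]
    cases l with
    | nil => simp at h1
    | cons a t =>
      simp only [List.head?_cons, Option.some.injEq] at h1
      subst h1
      rw [List.isChain_cons] at h
      rw [if_neg]
      · rfl
      · intro h2
        exact h.1 _ h2 rfl
  · rw [if_neg h1]; simp

theorem map_flipWord {f : S → S} (hf : Function.Injective f) (s : S) (l : List S) :
    (flipWord s l).map f = flipWord (f s) (l.map f) := by
  unfold flipWord
  have : (l.map f).head? = some (f s) ↔ l.head? = some s := by
    cases l with
    | nil => simp
    | cons a t => simp [hf.eq_iff]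
  by_cases h : l.head? = some s
  · rw [if_pos h, if_pos (this.2 h), List.map_tail]
  · rw [if_neg h, if_neg (fun h' => h (this.1 h')), List.map_cons]

abbrev RWord (S : Type*) := {l : List S // l.IsChain (· ≠ ·)}

def wordTree (S : Type*) : SimpleGraph (RWord S) where
  Adj x y := ∃ s, y.1 = x.1 ++ [s] ∨ x.1 = y.1 ++ [s]
  symm := ⟨fun _ _ ⟨s, h⟩ => ⟨s, h.symm⟩⟩
  loopless := ⟨fun _ ⟨s, h⟩ => by
    rcases h with h | h <;> simp at h⟩

def RWord.nil : RWord S := ⟨[], List.isChain_nil⟩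

theorem wordTree_bridge (x y : RWord S) (s : S) (h : y.1 = x.1 ++ [s]) :
    ¬ ((wordTree S).deleteEdges {s(x, y)}).Reachable y x := by
  rintro ⟨p⟩
  have key : ∀ a b : RWord S, ((wordTree S).deleteEdges {s(x, y)}).Walk a b → y.1 <+: a.1 →
      y.1 <+: b.1 := by
    intro a b p
    induction p with
    | nil => exact id
    | @cons a b c hab p ih =>
      intro ha
      apply ih
      rw [SimpleGraph.deleteEdges_adj] at hab
      obtain ⟨⟨t, h1 | h1⟩, h2⟩ := hab
      · rw [h1]; exact ha.trans (List.prefix_append _ _)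
      · rw [h1, h, List.prefix_concat_iff] at ha
        rcases ha with ha | ha
        · exfalso
          have h3 := List.append_inj' ha rfl
          apply h2
          have e1 : b = x := Subtype.ext h3.1.symm
          have e2 : a = y := Subtype.ext (by rw [h1, h, ha])
          rw [e1, e2, Sym2.eq_swap]; rfl
        · rwa [h]
  have := (key y x p List.prefix_rfl).length_le
  rw [h] at this
  simp at this

theorem wordTree_isTree : (wordTree S).IsTree := by
  have hr : ∀ (l : List S) (hl : l.IsChain (· ≠ ·)), (wordTree S).Reachable RWord.nil ⟨l, hl⟩ := by
    intro l
    induction l using List.reverseRecOn with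
    | nil => intro hl; exact SimpleGraph.Reachable.refl _
    | append_singleton l a ih =>
      intro hl
      refine (ih hl.left_of_append).trans (SimpleGraph.Adj.reachable ?_)
      exact ⟨a, Or.inl rfl⟩
  have : Nonempty (RWord S) := ⟨RWord.nil⟩
  refine ⟨⟨fun a b => (hr a.1 a.2).symm.trans (hr b.1 b.2)⟩, ?_⟩
  rw [SimpleGraph.isAcyclic_iff_forall_adj_isBridge]
  intro a b hab
  rw [SimpleGraph.isBridge_iff]
  obtain ⟨s, h | h⟩ := hab
  · intro hr
    exact wordTree_bridge a b s h hr.symm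
  · intro hr
    refine wordTree_bridge b a s h ?_
    rwa [Sym2.eq_swap]

theorem wordTree_flip (s : S) (x y : RWord S) (h : (wordTree S).Adj x y) :
    (wordTree S).Adj ⟨flipWord s x.1, flipWord_chain s _ x.2⟩
      ⟨flipWord s y.1, flipWord_chain s _ y.2⟩ := by
  have main : ∀ (l : List S) (t : S), ∃ t', flipWord s (l ++ [t]) = flipWord s l ++ [t'] ∨
      flipWord s l = flipWord s (l ++ [t]) ++ [t'] := by
    intro l t
    cases l with
    | nil =>
      by_cases h : t = s
      · subst h; exact ⟨t, Or.inr (by simp [flipWord])⟩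
      · exact ⟨t, Or.inl (by simp [flipWord, h])⟩
    | cons a l =>
      refine ⟨t, Or.inl ?_⟩
      by_cases h : a = s
      · subst h; simp [flipWord]
      · simp [flipWord, h]
  obtain ⟨t, h | h⟩ := h
  · obtain ⟨t', h'⟩ := main x.1 t
    rw [← h] at h'
    exact ⟨t', h'⟩
  · obtain ⟨t', h'⟩ := main y.1 t
    rw [← h] at h'
    exact ⟨t', h'.symm⟩

noncomputable def flipPerm (s : S) : Equiv.Perm (RWord S) where
  toFun x := ⟨flipWord s x.1, flipWord_chain s _ x.2⟩
  invFun x := ⟨flipWord s x.1, flipWord_chain s _ x.2⟩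
  left_inv x := Subtype.ext (flipWord_flipWord s _ x.2)
  right_inv x := Subtype.ext (flipWord_flipWord s _ x.2)

instance rwordAction {A : Type*} [Group A] [MulAction A S] : MulAction A (RWord S) where
  smul a x := ⟨x.1.map (a • ·), by
    rw [List.isChain_map]
    exact x.2.imp (fun _ _ h h' => h (MulAction.injective a h'))⟩
  one_smul x := Subtype.ext (by
    change x.1.map ((1 : A) • ·) = x.1
    simp)
  mul_smul a b x := Subtype.ext (by
    change x.1.map ((a * b) • ·) = (x.1.map (b • ·)).map (a • ·)
    simp [mul_smul])

theorem rword_smul_val {A : Type*} [Group A] [MulAction A S] (a : A) (x : RWord S) :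
    (a • x).1 = x.1.map (a • ·) := rfl

end Amalgam

theorem comap_equiv {A G : Type*} [Group A] [Group G] (θ : A →* G) (hθ : Function.Injective θ)
    (L : Subgroup G) (hL : L ≤ θ.range) : Nonempty (L.comap θ ≃* L) := by
  have : (L.comap θ).map θ = L := Subgroup.map_comap_eq_self hL
  exact ⟨((L.comap θ).equivMapOfInjective θ hθ).trans (MulEquiv.subgroupCongr this)⟩

theorem amalgam_coherent {A G : Type} [Group A] [Group G] (ψ : A →* G)
    (hψ : Function.Injective ψ) (C : Subgroup A) (v : G) (hv : v * v = 1)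
    (hcomm : ∀ c ∈ C, ψ c * v = v * ψ c)
    (hgen : Subgroup.closure (Set.range ψ ∪ {v}) = ⊤)
    (huniv : ∀ (P : Type) [Group P] (α : A →* P) (p : P), p * p = 1 →
      (∀ c ∈ C, α c * p = p * α c) → ∃ β : G →* P, β.comp ψ = α ∧ β v = p)
    (hC : ∀ M ≤ C, M.FG) (hA : Group.Coherent A) : Group.Coherent G := by
  classical
  let S := A ⧸ C
  let s0 : S := ((1 : A) : A ⧸ C)
  have hs0 : ∀ c : A, c • s0 = s0 ↔ c ∈ C := by
    intro c
    change ((c * 1 : A) : A ⧸ C) = ((1 : A) : A ⧸ C) ↔ _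
    rw [QuotientGroup.eq]; simp
  have hmf : ∀ (a : A) (s : S) (x : RWord S), a • flipPerm s x = flipPerm (a • s) (a • x) := by
    intro a s x
    exact Subtype.ext (map_flipWord (MulAction.injective a) s x.1)
  obtain ⟨β, hβψ, hβv⟩ := huniv (Equiv.Perm (RWord S)) (MulAction.toPermHom A (RWord S))
    (flipPerm s0) (by ext1 x; exact (flipPerm s0).left_inv x) (by
      intro c hc
      ext1 x
      change c • flipPerm s0 x = flipPerm s0 (c • x)
      rw [hmf, (hs0 c).2 hc])
  let act : MulAction G (RWord S) := MulAction.compHom _ β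
  have hψact : ∀ (a : A) (x : RWord S), ψ a • x = a • x := by
    intro a x
    change (β.comp ψ) a x = _
    rw [hβψ]; rfl
  have hvact : ∀ x : RWord S, v • x = flipPerm s0 x := by
    intro x
    change β v x = _
    rw [hβv]
  have hmapadj : ∀ (a : A) (x y : RWord S), (wordTree S).Adj x y →
      (wordTree S).Adj (a • x) (a • y) := by
    rintro a x y ⟨s, h⟩
    refine ⟨a • s, ?_⟩
    simp only [rword_smul_val]
    rcases h with h | h
    · left; rw [h]; simp
    · right; rw [h]; simp
  have hadj : ∀ (g : G) (x y : RWord S), (wordTree S).Adj x y → (wordTree S).Adj (g • x) (g • y) := by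
    intro g
    have hg : g ∈ Subgroup.closure (Set.range ψ ∪ {v}) := by rw [hgen]; trivial
    suffices h : ∀ x y : RWord S, (wordTree S).Adj (g • x) (g • y) ↔ (wordTree S).Adj x y from
      fun x y h' => (h x y).2 h'
    induction hg using Subgroup.closure_induction with
    | mem g hg =>
      intro x y
      rcases hg with ⟨a, rfl⟩ | rfl
      · simp only [hψact]
        refine ⟨fun h => ?_, hmapadj a x y⟩
        simpa using hmapadj a⁻¹ _ _ h
      · have h1 : ∀ x y : RWord S, (wordTree S).Adj x y → (wordTree S).Adj (g • x) (g • y) := by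
          intro x y h
          rw [hvact, hvact]
          exact wordTree_flip s0 x y h
        refine ⟨fun h => ?_, h1 x y⟩
        have := h1 _ _ h
        rwa [← mul_smul, ← mul_smul, hv, one_smul, one_smul] at this
    | one => intro x y; simp
    | mul g h _ _ ihg ihh => intro x y; rw [mul_smul, mul_smul, ihg, ihh]
    | inv g _ ih => intro x y; rw [← ih]; simp
  let hat : S → G := fun s => Quotient.liftOn' s (fun a => ψ a * v * (ψ a)⁻¹) (by
    intro a b h
    rw [QuotientGroup.leftRel_apply] at h
    have h1 := hcomm _ h
    rw [map_mul, map_inv] at h1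
    change ψ a * v * (ψ a)⁻¹ = ψ b * v * (ψ b)⁻¹
    have h2 : ψ b * v = ψ a * (((ψ a)⁻¹ * ψ b) * v) := by group
    rw [h2, h1]; group)
  have hhat : ∀ a : A, hat (a : A ⧸ C) = ψ a * v * (ψ a)⁻¹ := fun a => rfl
  have hhatsmul : ∀ (a : A) (s : S), ψ a * hat s = hat (a • s) * ψ a := by
    intro a s
    obtain ⟨b, rfl⟩ := QuotientGroup.mk_surjective s
    have : (a • (b : A ⧸ C)) = ((a * b : A) : A ⧸ C) := rfl
    rw [this, hhat, hhat, map_mul]; group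
  have hhat0 : hat s0 = v := by rw [hhat]; simp
  let Φ : List S → G := fun l => (l.map hat).prod
  have hΦmap : ∀ (a : A) (l : List S), ψ a * Φ l = Φ (l.map (a • ·)) * ψ a := by
    intro a l
    induction l with
    | nil => simp [Φ]
    | cons s l ih =>
      simp only [Φ, List.map_cons, List.prod_cons] at ih ⊢
      rw [← mul_assoc, hhatsmul, mul_assoc, ih, mul_assoc]
  have hΦflip : ∀ l : List S, v * Φ l = Φ (flipWord s0 l) := by
    intro l
    unfold flipWord
    split_ifs with h
    · cases l with
      | nil => simp at h
      | cons a t =>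
        simp only [List.head?_cons, Option.some.injEq] at h
        subst h
        simp only [Φ, List.map_cons, List.prod_cons, List.tail_cons]
        rw [hhat0, ← mul_assoc, hv, one_mul]
    · simp only [Φ, List.map_cons, List.prod_cons, hhat0]
  have hΦ : ∀ (g : G) (x : RWord S), ∃ a, g * Φ x.1 = Φ (g • x).1 * ψ a := by
    intro g
    have hg : g ∈ Subgroup.closure (Set.range ψ ∪ {v}) := by rw [hgen]; trivial
    induction hg using Subgroup.closure_induction with
    | mem g hg =>
      intro x
      rcases hg with ⟨a, rfl⟩ | rfl
      · exact ⟨a, by rw [hψact, hΦmap]; rfl⟩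
      · exact ⟨1, by rw [hvact, hΦflip, map_one, mul_one]; rfl⟩
    | one => intro x; exact ⟨1, by simp⟩
    | mul g h _ _ ihg ihh =>
      intro x
      obtain ⟨a, ha⟩ := ihh x
      obtain ⟨b, hb⟩ := ihg (h • x)
      exact ⟨b * a, by rw [mul_assoc, ha, ← mul_assoc, hb, mul_smul, map_mul, mul_assoc]⟩
    | inv g _ ih =>
      intro x
      obtain ⟨a, ha⟩ := ih (g⁻¹ • x)
      rw [smul_inv_smul] at ha
      refine ⟨a⁻¹, ?_⟩
      rw [map_inv, eq_mul_inv_iff_mul_eq, mul_assoc, ← ha, inv_mul_cancel_left]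
  have hstabnil : ∀ g : G, g • (RWord.nil : RWord S) = RWord.nil → ∃ a, g = ψ a := by
    intro g hg
    obtain ⟨a, ha⟩ := hΦ g RWord.nil
    rw [hg] at ha
    exact ⟨a, by simpa [Φ, RWord.nil] using ha⟩
  have hψnil : ∀ a : A, ψ a • (RWord.nil : RWord S) = RWord.nil := by
    intro a
    rw [hψact]; rfl
  have htrans : ∀ (l : List S) (hl : l.IsChain (· ≠ ·)), ∃ g : G,
      g • (RWord.nil : RWord S) = ⟨l, hl⟩ := by
    intro l
    induction l with
    | nil => intro hl; exact ⟨1, one_smul _ _⟩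
    | cons s l ih =>
      intro hl
      obtain ⟨g, hg⟩ := ih hl.tail
      obtain ⟨a, rfl⟩ := QuotientGroup.mk_surjective s
      refine ⟨ψ a * v * ψ a⁻¹ * g, ?_⟩
      rw [mul_smul, hg, mul_smul, mul_smul, hψact, hψact, hvact, hmf, smul_inv_smul]
      apply Subtype.ext
      have e : a • s0 = (a : A ⧸ C) := by
        change ((a * 1 : A) : A ⧸ C) = _
        rw [mul_one]
      rw [e]
      change flipWord _ l = _
      unfold flipWord
      rw [if_neg]
      intro h
      rw [List.isChain_cons] at hl
      exact hl.1 _ h rfl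
  refine tree_coherent (wordTree S) wordTree_isTree hadj ?_ ?_
  · intro x L hL hfg
    obtain ⟨g, hg⟩ : ∃ g : G, g • (RWord.nil : RWord S) = x := htrans x.1 x.2
    let θ : A →* G := (MulAut.conj g).toMonoidHom.comp ψ
    have hθ : Function.Injective θ := (MulAut.conj g).injective.comp hψ
    obtain ⟨e⟩ := comap_equiv θ hθ L (by
      intro l hl
      have h1 : l • x = x := hL hl
      obtain ⟨a, ha⟩ := hstabnil (g⁻¹ * l * g) (by
        rw [mul_smul, mul_smul, hg, h1, ← hg, inv_smul_smul])
      refine ⟨a, ?_⟩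
      change g * ψ a * g⁻¹ = l
      rw [← ha]; group)
    refine Group.FinitelyPresented.congr e (hA _ ?_)
    rw [← Group.fg_iff_subgroup_fg] at hfg ⊢
    exact Group.fg_of_surjective (f := e.symm.toMonoidHom) e.symm.surjective
  · have main : ∀ (x y : RWord S) (s : S), y.1 = x.1 ++ [s] → ∀ L : Subgroup G,
        L ≤ MulAction.stabilizer G x → L ≤ MulAction.stabilizer G y → L.FG := by
      intro x y s hxy L hLx hLy
      obtain ⟨g, hg⟩ : ∃ g : G, g • (RWord.nil : RWord S) = x := htrans x.1 x.2
      have hadj1 : (wordTree S).Adj RWord.nil (g⁻¹ • y) := by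
        have := hadj g⁻¹ x y ⟨s, Or.inl hxy⟩
        have e : g⁻¹ • x = RWord.nil := by rw [inv_smul_eq_iff, hg]
        rwa [e] at this
      obtain ⟨s', hs'⟩ := hadj1
      have hs'' : (g⁻¹ • y).1 = [s'] := by
        rcases hs' with h | h
        · simpa [RWord.nil] using h
        · simp [RWord.nil] at h
      obtain ⟨a0, rfl⟩ := QuotientGroup.mk_surjective s'
      have e : a0 • s0 = (a0 : A ⧸ C) := by
        change ((a0 * 1 : A) : A ⧸ C) = _
        rw [mul_one]
      let w0 : RWord S := ⟨[s0], List.isChain_singleton _⟩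
      let g' := g * ψ a0
      have hg'x : g' • (RWord.nil : RWord S) = x := by
        rw [mul_smul, hψnil, hg]
      have hg'y : g' • w0 = y := by
        rw [mul_smul, ← eq_inv_smul_iff, hψact]
        apply Subtype.ext
        rw [hs'', ← e]; rfl
      let θ : A →* G := (MulAut.conj g').toMonoidHom.comp ψ
      have hθ : Function.Injective θ := (MulAut.conj g').injective.comp hψ
      obtain ⟨e⟩ := comap_equiv θ hθ L (by
        intro l hl
        have h1 : l • x = x := hLx hl
        obtain ⟨a, ha⟩ := hstabnil (g'⁻¹ * l * g') (by
          rw [mul_smul, mul_smul, hg'x, h1, ← hg'x, inv_smul_smul])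
        refine ⟨a, ?_⟩
        change g' * ψ a * g'⁻¹ = l
        rw [← ha]; group)
      have hfg := hC (L.comap θ) (by
        intro a ha
        have h1 : (g' * ψ a * g'⁻¹) • y = y := hLy ha
        rw [← hg'y, mul_smul, inv_smul_smul, mul_smul, smul_left_cancel_iff, hψact] at h1
        have h2 := congrArg Subtype.val h1
        have h3 : [a • s0] = [s0] := h2
        rw [List.singleton_inj] at h3
        exact (hs0 a).1 h3)
      rw [← Group.fg_iff_subgroup_fg] at hfg ⊢
      exact Group.fg_of_surjective (f := e.toMonoidHom) e.surjective
    rintro x y ⟨s, h | h⟩ L hx hy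
    · exact main x y s h L hx hy
    · exact main y x s h L hy hx

theorem slender_sup {G : Type*} [Group G] (N M : Subgroup G) (hN : ∀ K ≤ N, K.FG)
    (hM : ∀ K ≤ M, K.FG) (hnorm : M ≤ Subgroup.normalizer (N : Set G)) :
    ∀ K ≤ N ⊔ M, K.FG := by
  classical
  intro K hK
  let M1 : Subgroup G :=
    { carrier := {m | m ∈ M ∧ ∃ n ∈ N, n * m ∈ K}
      one_mem' := ⟨one_mem _, 1, one_mem _, by simp⟩
      mul_mem' := by
        rintro a b ⟨ha, n, hn, h⟩ ⟨hb, n', hn', h'⟩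
        refine ⟨mul_mem ha hb, n * (a * n' * a⁻¹),
          mul_mem hn ((Subgroup.mem_normalizer_iff.1 (hnorm ha) n').1 hn'), ?_⟩
        have := mul_mem h h'
        convert this using 1
        group
      inv_mem' := by
        rintro a ⟨ha, n, hn, h⟩
        refine ⟨inv_mem ha, a⁻¹ * n⁻¹ * a⁻¹⁻¹,
          (Subgroup.mem_normalizer_iff.1 (hnorm (inv_mem ha)) n⁻¹).1 (inv_mem hn), ?_⟩
        have := inv_mem h
        convert this using 1
        group }
  obtain ⟨U, hU⟩ := hM M1 (fun m hm => hm.1)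
  obtain ⟨W, hW⟩ := hN (K ⊓ N) inf_le_right
  have hch : ∀ m : G, ∃ n : G, m ∈ U → n ∈ N ∧ n * m ∈ K := by
    intro m
    by_cases h : m ∈ U
    · have : m ∈ M1 := by rw [← hU]; exact Subgroup.subset_closure h
      obtain ⟨-, n, hn, h'⟩ := this
      exact ⟨n, fun _ => ⟨hn, h'⟩⟩
    · exact ⟨1, fun h' => absurd h' h⟩
  choose c hc using hch
  refine ⟨W ∪ U.image (fun m => c m * m), le_antisymm ?_ ?_⟩
  · rw [Subgroup.closure_le]
    intro x hx
    rw [Finset.mem_coe, Finset.mem_union, Finset.mem_image] at hx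
    rcases hx with hx | ⟨m, hm, rfl⟩
    · have : x ∈ K ⊓ N := by rw [← hW]; exact Subgroup.subset_closure hx
      exact this.1
    · exact (hc m hm).2
  · set Z := Subgroup.closure ((W ∪ U.image (fun m => c m * m) : Finset G) : Set G) with hZ
    have hWZ : K ⊓ N ≤ Z := by
      rw [← hW]
      apply Subgroup.closure_mono
      intro x hx
      simp only [Finset.coe_union]
      exact Or.inl hx
    have hUZ : ∀ m ∈ U, c m * m ∈ Z := fun m hm => Subgroup.subset_closure (by
      rw [Finset.mem_coe, Finset.mem_union]
      exact Or.inr (Finset.mem_image_of_mem _ hm))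
    have key : ∀ m ∈ M1, ∃ n ∈ N, n * m ∈ Z ∧ n * m ∈ K := by
      intro m hm
      have hmM := hm.1
      rw [← hU] at hm
      have : m ∈ M ∧ ∃ n ∈ N, n * m ∈ Z ∧ n * m ∈ K := by
        clear hmM
        induction hm using Subgroup.closure_induction with
        | mem x hx =>
          have : x ∈ M1 := by rw [← hU]; exact Subgroup.subset_closure hx
          exact ⟨this.1, c x, (hc x hx).1, hUZ x hx, (hc x hx).2⟩
        | one => exact ⟨one_mem _, 1, one_mem _, by simp, by simp⟩
        | mul a b _ _ iha ihb =>
          obtain ⟨ha, n, hn, h, h2⟩ := iha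
          obtain ⟨hb, n', hn', h', h2'⟩ := ihb
          have e : n * (a * n' * a⁻¹) * (a * b) = (n * a) * (n' * b) := by group
          refine ⟨mul_mem ha hb, n * (a * n' * a⁻¹),
            mul_mem hn ((Subgroup.mem_normalizer_iff.1 (hnorm ha) n').1 hn'), ?_, ?_⟩
          · rw [e]; exact mul_mem h h'
          · rw [e]; exact mul_mem h2 h2'
        | inv a _ iha =>
          obtain ⟨ha, n, hn, h, h2⟩ := iha
          have e : a⁻¹ * n⁻¹ * a⁻¹⁻¹ * a⁻¹ = (n * a)⁻¹ := by group
          refine ⟨inv_mem ha, a⁻¹ * n⁻¹ * a⁻¹⁻¹,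
            (Subgroup.mem_normalizer_iff.1 (hnorm (inv_mem ha)) n⁻¹).1 (inv_mem hn), ?_, ?_⟩
          · rw [e]; exact inv_mem h
          · rw [e]; exact inv_mem h2
      exact this.2
    intro x hx
    have hx' : x ∈ ((N ⊔ M : Subgroup G) : Set G) := hK hx
    rw [Subgroup.coe_mul_of_right_le_normalizer_left N M hnorm] at hx'
    obtain ⟨n, hn, m, hm, rfl⟩ := hx'
    change n * m ∈ K at hx
    obtain ⟨n', hn', h1, h2⟩ := key m ⟨hm, n, hn, hx⟩
    have h3 : n * n'⁻¹ ∈ K ⊓ N := by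
      refine Subgroup.mem_inf.2 ⟨?_, mul_mem hn (inv_mem hn')⟩
      have := mul_mem hx (inv_mem h2)
      convert this using 1
      group
    have := mul_mem (hWZ h3) h1
    convert this using 1
    group

theorem slender_zpowers {G : Type*} [Group G] (x : G) : ∀ K ≤ Subgroup.zpowers x, K.FG := by
  intro K hK
  have := Subgroup.isCyclic_of_le hK
  obtain ⟨g, hg⟩ := (Subgroup.isCyclic_iff_exists_zpowers_eq_top K).1 this
  refine ⟨{g}, ?_⟩
  rw [Finset.coe_singleton, ← Subgroup.zpowers_eq_closure, hg]

theorem centralizes_mem_normalizer {G : Type*} [Group G] (U : Set G) (x : G)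
    (h : ∀ u ∈ U, Commute x u) : x ∈ Subgroup.normalizer (Subgroup.closure U : Set G) := by
  apply Subgroup.centralizer_le_normalizer
  rw [Subgroup.centralizer_closure, Subgroup.mem_centralizer_iff]
  intro u hu
  exact (h u hu).eq.symm

theorem slender_closure {G : Type*} [Group G] (n : ℕ) : ∀ (U : Finset G), U.card ≤ n →
    (∀ u ∈ U, u * u = 1) →
    (∀ a ∈ U, ∀ b ∈ U, ∀ c ∈ U, ¬ Commute a b → ¬ Commute a c → b = c) →
    ∀ K ≤ Subgroup.closure (U : Set G), K.FG := by
  classical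
  induction n with
  | zero =>
    intro U hU _ _ K hK
    have : U = ∅ := by simpa using hU
    subst this
    simp only [Finset.coe_empty, Subgroup.closure_empty, le_bot_iff] at hK
    rw [hK]
    exact Subgroup.FG.bot
  | succ n ih =>
    intro U hU hsq hcm K hK
    rcases U.eq_empty_or_nonempty with rfl | ⟨s, hs⟩
    · exact ih ∅ (by simp) (by simp) (by simp) K hK
    have hcard : (U.erase s).card ≤ n := by
      rw [Finset.card_erase_of_mem hs]; omega
    by_cases h : ∀ t ∈ U, Commute s t
    · have h1 := ih (U.erase s) hcard (fun u hu => hsq u (Finset.mem_of_mem_erase hu))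
        (fun a ha b hb c hc => hcm a (Finset.mem_of_mem_erase ha) b (Finset.mem_of_mem_erase hb)
          c (Finset.mem_of_mem_erase hc))
      refine slender_sup _ (Subgroup.zpowers s) h1 (slender_zpowers s) ?_ K (hK.trans ?_)
      · rw [Subgroup.zpowers_le]
        exact centralizes_mem_normalizer _ _ (fun u hu => h u (Finset.mem_of_mem_erase hu))
      · rw [Subgroup.closure_le]
        intro u hu
        by_cases hus : u = s
        · subst hus
          exact Subgroup.mem_sup_right (Subgroup.mem_zpowers u)
        · exact Subgroup.mem_sup_left (Subgroup.subset_closure (Finset.mem_erase.2 ⟨hus, hu⟩))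
    · push Not at h
      obtain ⟨t, ht, hst⟩ := h
      set U' := (U.erase s).erase t with hU'
      have hsub : ∀ u ∈ U', u ∈ U := fun u hu =>
        Finset.mem_of_mem_erase (Finset.mem_of_mem_erase hu)
      have h1 := ih U' ((Finset.card_erase_le).trans hcard) (fun u hu => hsq u (hsub u hu))
        (fun a ha b hb c hc => hcm a (hsub a ha) b (hsub b hb) c (hsub c hc))
      have hs' : ∀ u ∈ U', Commute s u := by
        intro u hu
        by_contra hc
        exact (Finset.ne_of_mem_erase hu) (hcm s hs u (hsub u hu) t ht hc hst)
      have ht' : ∀ u ∈ U', Commute t u := by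
        intro u hu
        by_contra hc
        exact (Finset.ne_of_mem_erase (Finset.mem_of_mem_erase hu))
          (hcm t ht u (hsub u hu) s hs hc (fun h => hst h.symm))
      have hsi : s⁻¹ = s := inv_eq_of_mul_eq_one_left (hsq s hs)
      have hti : t⁻¹ = t := inv_eq_of_mul_eq_one_left (hsq t ht)
      have h2 := slender_sup _ (Subgroup.zpowers (s * t)) h1 (slender_zpowers _) (by
        rw [Subgroup.zpowers_le]
        exact centralizes_mem_normalizer _ _ (fun u hu => (hs' u hu).mul_left (ht' u hu)))
      refine slender_sup _ (Subgroup.zpowers s) h2 (slender_zpowers s) ?_ K (hK.trans ?_)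
      · rw [Subgroup.zpowers_le]
        apply Subgroup.normalizer_inf_normalizer_le_normalizer_sup
        refine Subgroup.mem_inf.2 ⟨centralizes_mem_normalizer _ _ hs', ?_⟩
        have hconj : ∀ x ∈ Subgroup.zpowers (s * t), s * x * s⁻¹ ∈ Subgroup.zpowers (s * t) := by
          rintro _ ⟨k, rfl⟩
          refine ⟨-k, ?_⟩
          have e : s * (s * t) * s⁻¹ = (s * t)⁻¹ := by
            rw [mul_inv_rev, hsi, hti, ← mul_assoc s s t, hsq s hs, one_mul]
          change (s * t) ^ (-k) = s * (s * t) ^ k * s⁻¹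
          rw [← conj_zpow, e, inv_zpow, zpow_neg]
        rw [Subgroup.mem_normalizer_iff]
        intro x
        refine ⟨hconj x, fun hx => ?_⟩
        have := hconj _ hx
        rw [hsi] at this
        have e : s * (s * x * s) * s = (s * s) * x * (s * s) := by group
        rwa [e, hsq s hs, one_mul, mul_one] at this
      · rw [Subgroup.closure_le]
        intro u hu
        by_cases hus : u = s
        · subst hus
          exact Subgroup.mem_sup_right (Subgroup.mem_zpowers u)
        by_cases hut : u = t
        · subst hut
          have e : u = s * (s * u) := by rw [← mul_assoc, hsq s hs, one_mul]
          have hm := mul_mem (Subgroup.mem_sup_right (Subgroup.mem_zpowers s))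
            (Subgroup.mem_sup_left (Subgroup.mem_sup_right (Subgroup.mem_zpowers (s * u)))
              : s * u ∈ Subgroup.closure (U' : Set G) ⊔ Subgroup.zpowers (s * u) ⊔
                Subgroup.zpowers s)
          rw [← e] at hm
          exact hm
        · exact Subgroup.mem_sup_left (Subgroup.mem_sup_left (Subgroup.subset_closure
            (Finset.mem_erase.2 ⟨hut, Finset.mem_erase.2 ⟨hus, hu⟩⟩)))

section Racg
variable {V : Type} [DecidableEq V] (Γ : SimpleGraph V) [DecidableRel Γ.Adj]

def racgGen (v : V) : Γ.racg := Γ.coxeterMatrix.simple v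

theorem racgGen_sq (v : V) : racgGen Γ v * racgGen Γ v = 1 :=
  Γ.coxeterMatrix.toCoxeterSystem.simple_mul_simple_self v

theorem racgGen_comm (v w : V) (h : Γ.Adj v w) : Commute (racgGen Γ v) (racgGen Γ w) := by
  have h1 := Γ.coxeterMatrix.toCoxeterSystem.simple_mul_simple_pow v w
  have h2 : Γ.coxeterMatrix.M v w = 2 := by
    simp [SimpleGraph.coxeterMatrix, h.ne, h]
  rw [h2] at h1
  have h3 : (racgGen Γ v * racgGen Γ w) ^ 2 = 1 := h1
  have hv : (racgGen Γ v)⁻¹ = racgGen Γ v := inv_eq_of_mul_eq_one_left (racgGen_sq Γ v)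
  have hw : (racgGen Γ w)⁻¹ = racgGen Γ w := inv_eq_of_mul_eq_one_left (racgGen_sq Γ w)
  rw [pow_two] at h3
  have h4 := inv_eq_of_mul_eq_one_left h3
  rw [mul_inv_rev, hv, hw] at h4
  exact h4.symm

theorem racgGen_closure : Subgroup.closure (Set.range (racgGen Γ)) = ⊤ :=
  Γ.coxeterMatrix.toCoxeterSystem.subgroup_closure_range_simple

theorem racg_lift {P : Type*} [Group P] (f : V → P) (h1 : ∀ v, f v * f v = 1)
    (h2 : ∀ v w, Γ.Adj v w → f v * f w = f w * f v) :
    ∃ β : Γ.racg →* P, ∀ v, β (racgGen Γ v) = f v := by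
  have hl : Γ.coxeterMatrix.IsLiftable f := by
    intro v w
    change (f v * f w) ^ (if v = w then 1 else if Γ.Adj v w then 2 else 0) = 1
    split_ifs with h h'
    · subst h; rw [pow_one, h1]
    · rw [pow_two]
      nth_rewrite 2 [h2 v w h']
      rw [mul_assoc, ← mul_assoc (f w), h1, one_mul, h1]
    · rw [pow_zero]
  exact ⟨Γ.coxeterMatrix.toCoxeterSystem.lift ⟨f, hl⟩, fun v =>
    Γ.coxeterMatrix.toCoxeterSystem.lift_apply_simple hl v⟩

end Racg

theorem racg_remove {V : Type} [Fintype V] [DecidableEq V] (Γ : SimpleGraph V) [DecidableRel Γ.Adj]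
    (v : V) (hgood : ∀ a b c, Γ.Adj v a → Γ.Adj v b → Γ.Adj v c → a ≠ b → a ≠ c →
      ¬ Γ.Adj a b → ¬ Γ.Adj a c → b = c)
    (h : Group.Coherent (Γ.comap (Subtype.val : {w // w ≠ v} → V)).racg) :
    Group.Coherent Γ.racg := by
  classical
  set Γ' := Γ.comap (Subtype.val : {w // w ≠ v} → V) with hΓ'
  have hadj' : ∀ a b : {w // w ≠ v}, Γ'.Adj a b ↔ Γ.Adj a b := fun a b => Iff.rfl
  obtain ⟨ψ, hψ⟩ := racg_lift Γ' (fun w => racgGen Γ w.1) (fun w => racgGen_sq Γ w.1)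
    (fun a b hab => racgGen_comm Γ a.1 b.1 hab)
  obtain ⟨ρ, hρ⟩ := racg_lift Γ (fun w => if hw : w ≠ v then racgGen Γ' ⟨w, hw⟩ else 1)
    (by
      intro w
      by_cases hw : w ≠ v
      · simp only [dif_pos hw]; exact racgGen_sq Γ' _
      · simp only [dif_neg hw]; simp)
    (by
      intro a b hab
      by_cases ha : a ≠ v
      · by_cases hb : b ≠ v
        · simp only [dif_pos ha, dif_pos hb]; exact racgGen_comm Γ' _ _ hab
        · simp only [dif_neg hb]; simp
      · simp only [dif_neg ha]; simp)
  have hρψ : ∀ a, ρ (ψ a) = a := by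
    intro a
    have ha : a ∈ Subgroup.closure (Set.range (racgGen Γ')) := by
      rw [racgGen_closure]; trivial
    induction ha using Subgroup.closure_induction with
    | mem x hx =>
      obtain ⟨w, rfl⟩ := hx
      rw [hψ, hρ, dif_pos w.2]
    | one => simp
    | mul x y _ _ hx hy => rw [map_mul, map_mul, hx, hy]
    | inv x _ hx => rw [map_inv, map_inv, hx]
  let U : Finset Γ'.racg :=
    (Finset.univ.filter (fun w : {w // w ≠ v} => Γ.Adj v w.1)).image (racgGen Γ')
  have hU : ∀ u ∈ U, ∃ w : {w // w ≠ v}, Γ.Adj v w.1 ∧ racgGen Γ' w = u := by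
    intro u hu
    obtain ⟨w, hw, rfl⟩ := Finset.mem_image.1 hu
    exact ⟨w, (Finset.mem_filter.1 hw).2, rfl⟩
  have hU' : ∀ w : {w // w ≠ v}, Γ.Adj v w.1 → racgGen Γ' w ∈ U := fun w hw =>
    Finset.mem_image_of_mem _ (Finset.mem_filter.2 ⟨Finset.mem_univ _, hw⟩)
  refine amalgam_coherent ψ (Function.LeftInverse.injective hρψ)
    (Subgroup.closure (U : Set Γ'.racg)) (racgGen Γ v) (racgGen_sq Γ v) ?_ ?_ ?_ ?_ h
  · intro c hc
    induction hc using Subgroup.closure_induction with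
    | mem x hx =>
      obtain ⟨w, hw, rfl⟩ := hU x hx
      rw [hψ]
      exact (racgGen_comm Γ v w hw).symm
    | one => simp
    | mul x y _ _ hx hy => rw [map_mul, mul_assoc, hy, ← mul_assoc, hx, mul_assoc]
    | inv x _ hx =>
      rw [map_inv]
      exact (show Commute (ψ x) (racgGen Γ v) from hx).inv_left
  · rw [eq_top_iff, ← racgGen_closure Γ, Subgroup.closure_le]
    rintro _ ⟨w, rfl⟩
    apply Subgroup.subset_closure
    by_cases hw : w = v
    · subst hw; exact Or.inr rfl
    · exact Or.inl ⟨racgGen Γ' ⟨w, hw⟩, hψ _⟩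
  · intro P _ α p hp hc
    obtain ⟨β, hβ⟩ := racg_lift Γ (fun w => if hw : w ≠ v then α (racgGen Γ' ⟨w, hw⟩) else p)
      (by
        intro w
        by_cases hw : w ≠ v
        · simp only [dif_pos hw]; rw [← map_mul, racgGen_sq, map_one]
        · simp only [dif_neg hw]; exact hp)
      (by
        intro a b hab
        by_cases ha : a ≠ v
        · by_cases hb : b ≠ v
          · simp only [dif_pos ha, dif_pos hb]
            rw [← map_mul, ← map_mul]
            congr 1
            exact racgGen_comm Γ' ⟨a, ha⟩ ⟨b, hb⟩ hab
          · simp only [dif_neg hb, dif_pos ha]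
            rw [not_not] at hb
            subst hb
            exact hc _ (Subgroup.subset_closure (hU' ⟨a, ha⟩ hab.symm))
        · rw [not_not] at ha
          subst ha
          have hb : b ≠ a := hab.ne.symm
          simp only [dif_pos hb, ne_eq, not_true_eq_false, dif_neg, not_false_eq_true]
          exact (hc _ (Subgroup.subset_closure (hU' ⟨b, hb⟩ hab))).symm)
    refine ⟨β, ?_, ?_⟩
    · ext a
      have ha : a ∈ Subgroup.closure (Set.range (racgGen Γ')) := by
        rw [racgGen_closure]; trivial
      induction ha using Subgroup.closure_induction with
      | mem x hx =>
        obtain ⟨w, rfl⟩ := hx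
        rw [MonoidHom.comp_apply, hψ, hβ, dif_pos w.2]
      | one => simp
      | mul x y _ _ hx hy => rw [map_mul, map_mul, hx, hy]
      | inv x _ hx => rw [map_inv, map_inv, hx]
    · rw [hβ]; simp
  · refine slender_closure _ U le_rfl ?_ ?_
    · intro u hu
      obtain ⟨w, hw, rfl⟩ := hU u hu
      exact racgGen_sq Γ' w
    · intro x hx y hy z hz hxy hxz
      obtain ⟨a, ha, rfl⟩ := hU x hx
      obtain ⟨b, hb, rfl⟩ := hU y hy
      obtain ⟨c, hc, rfl⟩ := hU z hz
      have h1 : ∀ d : {w // w ≠ v}, ¬ Commute (racgGen Γ' a) (racgGen Γ' d) →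
          a.1 ≠ d.1 ∧ ¬ Γ.Adj a d := by
        intro d hd
        refine ⟨fun he => ?_, fun he => hd (racgGen_comm Γ' a d he)⟩
        rw [Subtype.ext he] at hd
        exact hd (Commute.refl _)
      have := hgood a b c ha hb hc (h1 b hxy).1 (h1 c hxz).1 (h1 b hxy).2 (h1 c hxz).2
      rw [Subtype.ext this]

theorem exists_good_vertex {V : Type} [Fintype V] (Γ : SimpleGraph V) [Nonempty V]
    (hcard : Fintype.card V ≤ 6) (hedges : Γ.edgeSet.ncard ≤ 8) :
    ∃ v, ∀ a b c, Γ.Adj v a → Γ.Adj v b → Γ.Adj v c → a ≠ b → a ≠ c →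
      ¬ Γ.Adj a b → ¬ Γ.Adj a c → b = c := by
  classical
  by_contra hno
  push Not at hno
  have hdeg : ∀ v, 3 ≤ Γ.degree v := by
    intro v
    obtain ⟨a, b, c, ha, hb, hc, hab, hac, -, -, hbc⟩ := hno v
    rw [← SimpleGraph.card_neighborFinset_eq_degree]
    have : ({a, b, c} : Finset V) ⊆ Γ.neighborFinset v := by
      intro x hx
      simp only [Finset.mem_insert, Finset.mem_singleton] at hx
      rw [SimpleGraph.mem_neighborFinset]
      rcases hx with rfl | rfl | rfl <;> assumption
    have h2 := Finset.card_le_card this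
    rwa [Finset.card_eq_three.2 ⟨a, b, c, hab, hac, hbc, rfl⟩] at h2
  have hsum := Γ.sum_degrees_eq_twice_card_edges
  have he : Γ.edgeFinset.card ≤ 8 := by
    rw [← SimpleGraph.coe_edgeFinset, Set.ncard_coe_finset] at hedges
    exact hedges
  have hle : Fintype.card V * 3 ≤ ∑ v, Γ.degree v := by
    have := Finset.card_nsmul_le_sum Finset.univ (fun v => Γ.degree v) 3 (fun v _ => hdeg v)
    simpa using this
  obtain ⟨v⟩ := ‹Nonempty V›
  obtain ⟨a, b, c, ha, hb, hc, hab, hac, nab, nac, hbc⟩ := hno v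
  have h1 : Γ.neighborFinset a ⊆ Finset.univ \ {a, b, c} := by
    intro x hx
    rw [SimpleGraph.mem_neighborFinset] at hx
    simp only [Finset.mem_sdiff, Finset.mem_univ, true_and, Finset.mem_insert,
      Finset.mem_singleton, not_or]
    refine ⟨hx.ne.symm, ?_, ?_⟩
    · rintro rfl; exact nab hx
    · rintro rfl; exact nac hx
  have h2 := Finset.card_le_card h1
  rw [Finset.card_sdiff_of_subset (Finset.subset_univ _),
    Finset.card_eq_three.2 ⟨a, b, c, hab, hac, hbc, rfl⟩, Finset.card_univ,
    SimpleGraph.card_neighborFinset_eq_degree] at h2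
  have h3 := hdeg a
  omega

theorem fp_of_subsingleton {G : Type*} [Group G] [Subsingleton G] : Group.FinitelyPresented G := by
  refine fp_of_finite (ι := Fin 0) ∅ Set.finite_empty ?_
  have : Subsingleton (PresentedGroup (∅ : Set (FreeGroup (Fin 0)))) :=
    (PresentedGroup.mk_surjective _).subsingleton
  exact
    { toFun := fun _ => 1
      invFun := fun _ => 1
      left_inv := fun _ => Subsingleton.elim _ _
      right_inv := fun _ => Subsingleton.elim _ _
      map_mul' := fun _ _ => Subsingleton.elim _ _ }

theorem racg_coherent_aux (n : ℕ) : ∀ {V : Type} [Fintype V] [DecidableEq V] (Γ : SimpleGraph V)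
    [DecidableRel Γ.Adj], Fintype.card V = n → n ≤ 6 → Γ.edgeSet.ncard ≤ 8 →
    Group.Coherent Γ.racg := by
  induction n with
  | zero =>
    intro V _ _ Γ _ hV _ _ H _
    have : IsEmpty V := Fintype.card_eq_zero_iff.1 hV
    have hs : Subsingleton Γ.racg := by
      have h := racgGen_closure Γ
      rw [Set.range_eq_empty, Subgroup.closure_empty] at h
      exact (Subgroup.subsingleton_iff).1 (subsingleton_of_bot_eq_top h)
    exact fp_of_subsingleton
  | succ n ih =>
    intro V _ _ Γ _ hV hn he
    have : Nonempty V := Fintype.card_pos_iff.1 (by omega)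
    obtain ⟨v, hv⟩ := exists_good_vertex Γ (by omega) he
    refine racg_remove Γ v hv (ih _ ?_ (by omega) ?_)
    · rw [Fintype.card_subtype_compl, Fintype.card_subtype_eq, hV]; rfl
    · refine le_trans ?_ he
      rw [← Set.ncard_image_of_injective _ (Sym2.map.injective Subtype.val_injective)]
      apply Set.ncard_le_ncard _ (Set.toFinite _)
      rintro _ ⟨e, h, rfl⟩
      induction e with
      | h x y => exact h

theorem racg_coherent_of_card_eq_six_of_edges_le_eight
    {V : Type} [Fintype V] [DecidableEq V] (Γ : SimpleGraph V) [DecidableRel Γ.Adj]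
    (hcard : Fintype.card V = 6) (hedges : Γ.edgeSet.ncard ≤ 8) :
    Group.Coherent Γ.racg := by
  exact racg_coherent_aux 6 Γ hcard le_rfl hedges
end
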